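/- Let n and n^l both lie in ℤ₊^{m₁+1}(•) × ℤ₊^{m₂+1}(•) with n_{1,m₁} ≥ 1, let A,B ∈ ℝ with |A| + |B| > 0, and define G_{n,0} = A·A_{n,0} + B·A_{n^l,0} and recursively G_{n,−j−1}(z) = ∫ G_{n,−j}(x) dσ²_j(x)/(z−x) for j = 0,…,m₂ (equivalently G_{n,−j} = A·A_{n,−j} + B·A_{n^l,−j}). Then for every j ∈ {1,…,m₂}, G_{n,−j} has at most N_{2,j} + 1 zeros in ℂ∖Δ²_{j−1}, counting multiplicities, and it changes sign at at least N_{2,j} points in the interior of Δ²_j; hence all zeros of G_{n,−j} in ℂ∖Δ²_{j−1} are real and simple. Here N_{2,j} = n_{2,j} + … + n_{2,m₂}. -/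

import Mathlib

open MeasureTheory Polynomial Set Filter

noncomputable section

/-- The support of a Borel measure on `ℝ`: points all of whose open neighborhoods
have positive measure. -/
def msupport (μ : Measure ℝ) : Set ℝ :=
  {x : ℝ | ∀ U : Set ℝ, IsOpen U → x ∈ U → μ U ≠ 0}

/-- The copy of a real set inside `ℂ`. -/
def cpx (s : Set ℝ) : Set ℂ := (fun x : ℝ => (x : ℂ)) '' s

/-- `nikhat μ e j g` is the Cauchy transform of the measure `⟨σ_j, …, σ_{j+g}⟩`,
where `σ_i = (e i) • (μ i)` is a measure of constant sign. -/
def nikhat (μ : ℕ → Measure ℝ) (e : ℕ → ℝ) : ℕ → ℕ → ℂ → ℂ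
  | j, 0, z => (e j : ℂ) * ∫ t, 1 / (z - (t : ℂ)) ∂(μ j)
  | j, g + 1, z => (e j : ℂ) * ∫ t, nikhat μ e (j + 1) g (t : ℂ) / (z - (t : ℂ)) ∂(μ j)

/-- The Cauchy transform `ŝ_{j+1,k}` of `s_{j+1,k} = ⟨σ_{j+1},…,σ_k⟩`, with the
convention that it is `≡ 1` when `k ≤ j`. -/
def wt (μ : ℕ → Measure ℝ) (e : ℕ → ℝ) (j k : ℕ) (z : ℂ) : ℂ :=
  if j < k then nikhat μ e (j + 1) (k - (j + 1)) z else 1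

/-- Integral of `f` against the measure `s_{j,k} = ⟨σ_j, …, σ_k⟩`
(whose density with respect to `σ_j` is `ŝ_{j+1,k}`). -/
def sInt (μ : ℕ → Measure ℝ) (e : ℕ → ℝ) (j k : ℕ) (f : ℝ → ℂ) : ℂ :=
  (e j : ℂ) * ∫ x, f x * wt μ e j k (x : ℂ) ∂(μ j)

/-- The linear form `𝒜_{n,j}(z) = ∑_{k=j}^{m₁} a_k(z) ŝ¹_{j+1,k}(z)`. -/
def linForm (μ : ℕ → Measure ℝ) (e : ℕ → ℝ) (m₁ j : ℕ) (A : ℕ → Polynomial ℝ)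
    (z : ℂ) : ℂ :=
  ∑ k ∈ Finset.Icc j m₁, Polynomial.aeval z (A k) * wt μ e j k z

/-- The linear forms with negative index:
`𝒜_{n,-j-1}(z) = ∫ 𝒜_{n,-j}(x) dσ²_j(x) / (z - x)`. -/
def linFormNeg (μ : ℕ → Measure ℝ) (e : ℕ → ℝ) (F : ℂ → ℂ) : ℕ → ℂ → ℂ
  | 0 => F
  | j + 1 => fun z => (e j : ℂ) * ∫ x, linFormNeg μ e F j (x : ℂ) / (z - (x : ℂ)) ∂(μ j)

/-- A Nikishin system `N(σ_0,…,σ_m)` of measures of constant sign `σ_j = (e j) • (μ j)`,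
with `Co(supp σ_j) = Δ_j = [a j, b j]` and `Δ_j ∩ Δ_{j+1} = ∅`. -/
structure NikSys (m : ℕ) where
  μ : ℕ → Measure ℝ
  e : ℕ → ℝ
  a : ℕ → ℝ
  b : ℕ → ℝ
  fin : ∀ j, IsFiniteMeasure (μ j)
  sgn : ∀ j, e j = 1 ∨ e j = -1
  hull : ∀ j ≤ m, convexHull ℝ (msupport (μ j)) = Set.Icc (a j) (b j)
  inf : ∀ j ≤ m, (msupport (μ j)).Infinite
  disj : ∀ j < m, Set.Icc (a j) (b j) ∩ Set.Icc (a (j + 1)) (b (j + 1)) = ∅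

/-- Decreasing multi-index (the class `ℤ₊^{m+1}(•)`). -/
def Decr (m : ℕ) (n : ℕ → ℕ) : Prop := ∀ j < m, n (j + 1) ≤ n j

/-- `|n| = n_0 + ⋯ + n_m`. -/
def msum (m : ℕ) (n : ℕ → ℕ) : ℕ := ∑ j ∈ Finset.range (m + 1), n j

/-- `N_{1,j} = n_j + ⋯ + n_m` (partial tail sums). -/
def tailSum (m : ℕ) (n : ℕ → ℕ) (j : ℕ) : ℕ := ∑ k ∈ Finset.Icc j m, n k

/-- Mixed type multiple orthogonal polynomials relative to `(n1;n2)` and `(S1,S2)`. -/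
def IsMOP (m₁ m₂ : ℕ) (S1 : NikSys m₁) (S2 : NikSys m₂)
    (n1 n2 : ℕ → ℕ) (A : ℕ → Polynomial ℝ) : Prop :=
  (∀ j ≤ m₁, (A j).degree < (n1 j : WithBot ℕ)) ∧
  (∃ j ≤ m₁, A j ≠ 0) ∧
  ∀ k ≤ m₂, ∀ ν < n2 k,
    sInt S2.μ S2.e 0 k (fun x => (x : ℂ) ^ ν * linForm S1.μ S1.e m₁ 0 A (x : ℂ)) = 0

/-- The "monic" normalization: the last entry different from zero has leading
coefficient `1`. -/
def MonicLast (m₁ : ℕ) (A : ℕ → Polynomial ℝ) : Prop :=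
  ∃ j ≤ m₁, (A j).Monic ∧ ∀ k, j < k → k ≤ m₁ → A k = 0

/-- `n^l`: increase the `l`-th component by one. -/
def bump (l : ℕ) (n : ℕ → ℕ) : ℕ → ℕ := fun j => if j = l then n j + 1 else n j


/-- `f` has at most `N` zeros, counting multiplicities, on `D ⊆ ℂ`
(multiplicities measured through vanishing of iterated derivatives). -/
def CZerosLE (f : ℂ → ℂ) (D : Set ℂ) (N : ℕ) : Prop :=
  ∀ (S : Finset ℂ) (ord : ℂ → ℕ), ↑S ⊆ D →
    (∀ x ∈ S, ∀ i < ord x, iteratedDeriv i f x = 0) → ∑ x ∈ S, ord x ≤ N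

/-- `f` has fewer than `N` zeros, counting multiplicities, on `D ⊆ ℂ`. -/
def CZerosLT (f : ℂ → ℂ) (D : Set ℂ) (N : ℕ) : Prop :=
  ∀ (S : Finset ℂ) (ord : ℂ → ℕ), ↑S ⊆ D →
    (∀ x ∈ S, ∀ i < ord x, iteratedDeriv i f x = 0) → ∑ x ∈ S, ord x < N

/-- A real function changes sign at `x₀`: every neighborhood of `x₀` contains points
`u, v` with `f u * f v < 0`. -/
def SignChangeAt (f : ℝ → ℝ) (x₀ : ℝ) : Prop :=
  ∀ δ > 0, ∃ u v : ℝ, |u - x₀| < δ ∧ |v - x₀| < δ ∧ f u * f v < 0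

/-!
If `G_{-j-1}` is the Cauchy transform of the density `G_{-j}` on `Δ_j`, then dividing the density
by `∏ (t - s)` over zeros `s` of `G_{-j-1}` off `Δ_j` raises its order of orthogonality by one per
zero; conjugate zeros may be adjoined, so the divisor can be taken real. Since `G_{-j}` is already
orthogonal to the polynomials of degree less than `n_{2,j}`, it changes sign on `Δ_j` at least
`n_{2,j}` plus the number of those zeros times.

Read from `G_{-j}` to `G_{-j-1}`, this passes upper bounds for the number of zeros along the
system, starting from the fact that a nonzero form `G_0` has fewer than `|n₁| + 1` zeros on `Δ_0`.
Read from `G_{-j-1}` to `G_{-j}`, it accumulates sign changes. The two counts differ by at most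
one, so neither a conjugate pair of nonreal zeros nor a double zero fits in between. Finally
`G_0` is nonzero because a form of multi-index `n^l` cannot have coefficients as small as those
of `n`: its orthogonality relations would give it too many zeros.
-/

section

open scoped Topology ComplexConjugate

/-! ### Measures carried by a compact set -/

lemma msupport_eq_support (μ : Measure ℝ) : msupport μ = μ.support := by
  ext x
  simp only [msupport, Measure.support_eq_forall_isOpen, mem_ofPred_eq, pos_iff_ne_zero]
  exact forall_congr' fun U => forall_comm

lemma msupport_subset_of_ae_mem {μ : Measure ℝ} {s : Set ℝ} (hs : IsClosed s)
    (h : ∀ᵐ t ∂μ, t ∈ s) : msupport μ ⊆ s :=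
  msupport_eq_support μ ▸ Measure.support_subset_of_isClosed hs h

lemma ae_mem_of_convexHull_msupport_eq {μ : Measure ℝ} {s : Set ℝ}
    (h : convexHull ℝ (msupport μ) = s) : ∀ᵐ t ∂μ, t ∈ s := by
  filter_upwards [Measure.support_mem_ae (μ := μ)] with t ht
  exact h ▸ subset_convexHull ℝ _ (msupport_eq_support μ ▸ ht)

lemma lt_of_infinite_of_convexHull_eq_Icc {s : Set ℝ} {a b : ℝ}
    (hs : s.Infinite) (h : convexHull ℝ s = Icc a b) : a < b := by
  by_contra hab
  exact hs ((subsingleton_Icc_of_ge (not_lt.mp hab)).finite.subset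
    (h ▸ subset_convexHull ℝ s))

section Compact

variable {E : Type*} [NormedAddCommGroup E] {K L : Set ℝ} {μ ν : Measure ℝ}
  [IsFiniteMeasure μ] [IsFiniteMeasure ν]

lemma integrable_of_continuousOn_of_ae_mem {f : ℝ → E} (hK : IsCompact K)
    (hμ : ∀ᵐ t ∂μ, t ∈ K) (hf : ContinuousOn f K) : Integrable f μ := by
  rw [← Measure.restrict_eq_self_of_ae_mem hμ]
  exact hf.integrableOn_compact hK

lemma integral_integral_swap_of_continuousOn_of_ae_mem [NormedSpace ℝ E] {f : ℝ → ℝ → E}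
    (hK : IsCompact K) (hμ : ∀ᵐ t ∂μ, t ∈ K) (hL : IsCompact L) (hν : ∀ᵐ t ∂ν, t ∈ L)
    (hf : ContinuousOn (Function.uncurry f) (K ×ˢ L)) :
    ∫ x, ∫ y, f x y ∂ν ∂μ = ∫ y, ∫ x, f x y ∂μ ∂ν := by
  refine integral_integral_swap ?_
  rw [← Measure.restrict_eq_self_of_ae_mem hμ, ← Measure.restrict_eq_self_of_ae_mem hν,
    Measure.prod_restrict]
  exact hf.integrableOn_compact (hK.prod hL)

end Compact

/-! ### Cauchy transforms -/

lemma sub_ofReal_ne_zero_of_notMem_cpx {K : Set ℝ} {z : ℂ} (hz : z ∉ cpx K) {t : ℝ}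
    (ht : t ∈ K) : z - t ≠ 0 :=
  fun h => hz ⟨t, ht, (sub_eq_zero.mp h).symm⟩

lemma ofReal_sub_ne_zero_of_notMem_cpx {K : Set ℝ} {z : ℂ} (hz : z ∉ cpx K) {t : ℝ}
    (ht : t ∈ K) : (t : ℂ) - z ≠ 0 :=
  fun h => hz ⟨t, ht, sub_eq_zero.mp h⟩

lemma isClosed_cpx {K : Set ℝ} (hK : IsCompact K) : IsClosed (cpx K) :=
  (hK.image Complex.continuous_ofReal).isClosed

lemma cpx_mono {s t : Set ℝ} (h : s ⊆ t) : cpx s ⊆ cpx t :=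
  image_mono h

@[simp]
lemma ofReal_mem_cpx {s : Set ℝ} {x : ℝ} : (x : ℂ) ∈ cpx s ↔ x ∈ s :=
  Complex.ofReal_injective.mem_set_image

/-- The Cauchy transform `∫ h(t) dμ(t) / (z - t)` of the measure with density `h` with respect
to `μ`. -/
def cauchyTransform (μ : Measure ℝ) (h : ℝ → ℂ) (z : ℂ) : ℂ :=
  ∫ t, h t / (z - t) ∂μ

section CauchyTransform

variable {K L : Set ℝ} {μ ν : Measure ℝ} {h : ℝ → ℂ} {z s : ℂ}

lemma continuousOn_div_sub_ofReal (hh : ContinuousOn h K) (hz : z ∉ cpx K) :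
    ContinuousOn (fun t : ℝ => h t / (z - t)) K :=
  hh.div (by fun_prop) fun _ ht => sub_ofReal_ne_zero_of_notMem_cpx hz ht

lemma continuousOn_div_ofReal_sub (hh : ContinuousOn h K) (hz : z ∉ cpx K) :
    ContinuousOn (fun t : ℝ => h t / (t - z)) K :=
  hh.div (by fun_prop) fun _ ht => ofReal_sub_ne_zero_of_notMem_cpx hz ht

lemma cauchyTransform_const_mul (c : ℂ) (h : ℝ → ℂ) (z : ℂ) :
    cauchyTransform μ (fun t => c * h t) z = c * cauchyTransform μ h z := by
  simp only [cauchyTransform, mul_div_assoc, integral_const_mul]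

variable [IsFiniteMeasure μ] [IsFiniteMeasure ν]

lemma integrable_div_sub_ofReal (hK : IsCompact K) (hμ : ∀ᵐ t ∂μ, t ∈ K)
    (hh : ContinuousOn h K) (hz : z ∉ cpx K) : Integrable (fun t : ℝ => h t / (z - t)) μ :=
  integrable_of_continuousOn_of_ae_mem hK hμ (continuousOn_div_sub_ofReal hh hz)

lemma exists_pos_forall_ball_le_norm_sub_ofReal (hK : IsCompact K) (hz : z ∉ cpx K) :
    ∃ ε > 0, ∀ w ∈ Metric.ball z ε, ∀ t ∈ K, ε ≤ ‖w - t‖ := by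
  obtain ⟨ε, hε, hball⟩ := Metric.mem_nhds_iff.mp ((isClosed_cpx hK).isOpen_compl.mem_nhds hz)
  refine ⟨ε / 2, half_pos hε, fun w hw t ht => ?_⟩
  by_contra! hlt
  refine hball (a := (t : ℂ)) ?_ ⟨t, ht, rfl⟩
  calc dist (t : ℂ) z ≤ dist (t : ℂ) w + dist w z := dist_triangle _ _ _
    _ < ε / 2 + ε / 2 := add_lt_add (by rwa [dist_comm, dist_eq_norm]) hw
    _ = ε := add_halves ε

lemma differentiableAt_cauchyTransform (hK : IsCompact K) (hμ : ∀ᵐ t ∂μ, t ∈ K)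
    (hh : ContinuousOn h K) (hz : z ∉ cpx K) : DifferentiableAt ℂ (cauchyTransform μ h) z := by
  obtain ⟨ε, hε, hdist⟩ := exists_pos_forall_ball_le_norm_sub_ofReal hK hz
  have hsub : ∀ w ∈ Metric.ball z ε, ∀ t ∈ K, w - t ≠ 0 := fun w hw t ht =>
    norm_pos_iff.mp (hε.trans_le (hdist w hw t ht))
  have hint : ∀ w ∈ Metric.ball z ε, Integrable (fun t : ℝ => h t / (w - t)) μ := fun w hw =>
    integrable_of_continuousOn_of_ae_mem hK hμ (hh.div (by fun_prop) (hsub w hw))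
  have hzε : z ∈ Metric.ball z ε := Metric.mem_ball_self hε
  refine (hasDerivAt_integral_of_dominated_loc_of_deriv_le (μ := μ) (𝕜 := ℂ)
    (F := fun w t => h t / (w - t)) (F' := fun w t => -(h t / (w - t) ^ 2))
    (bound := fun t => ‖h t‖ / ε ^ 2) (Metric.ball_mem_nhds z hε) ?_ (hint z hzε) ?_ ?_ ?_
    ?_).2.differentiableAt
  · filter_upwards [Metric.ball_mem_nhds z hε] with w hw using (hint w hw).aestronglyMeasurable
  · refine (integrable_of_continuousOn_of_ae_mem hK hμ ?_).aestronglyMeasurable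
    exact (hh.div (by fun_prop) fun t ht => pow_ne_zero 2 (hsub z hzε t ht)).neg
  · filter_upwards [hμ] with t ht w hw
    rw [norm_neg, norm_div, norm_pow]
    gcongr
    exact hdist w hw t ht
  · exact integrable_of_continuousOn_of_ae_mem hK hμ (hh.norm.div_const _)
  · filter_upwards [hμ] with t ht w hw
    simpa [div_eq_mul_inv] using
      (((hasDerivAt_id w).sub_const (t : ℂ)).inv (hsub w hw t ht)).const_mul (h t)

lemma analyticAt_cauchyTransform (hK : IsCompact K) (hμ : ∀ᵐ t ∂μ, t ∈ K)
    (hh : ContinuousOn h K) (hz : z ∉ cpx K) : AnalyticAt ℂ (cauchyTransform μ h) z :=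
  DifferentiableOn.analyticAt (s := (cpx K)ᶜ)
    (fun _ hw => (differentiableAt_cauchyTransform hK hμ hh hw).differentiableWithinAt)
    ((isClosed_cpx hK).isOpen_compl.mem_nhds hz)

lemma continuousOn_cauchyTransform_ofReal (hK : IsCompact K) (hμ : ∀ᵐ t ∂μ, t ∈ K)
    (hh : ContinuousOn h K) (hKL : Disjoint K L) :
    ContinuousOn (fun x : ℝ => cauchyTransform μ h x) L := fun _ hx =>
  ((analyticAt_cauchyTransform hK hμ hh
    (mt ofReal_mem_cpx.mp (hKL.notMem_of_mem_right hx))).continuousAt.comp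
      Complex.continuous_ofReal.continuousAt).continuousWithinAt

lemma cauchyTransform_add {h' : ℝ → ℂ} (hK : IsCompact K) (hμ : ∀ᵐ t ∂μ, t ∈ K)
    (hh : ContinuousOn h K) (hh' : ContinuousOn h' K) (hz : z ∉ cpx K) :
    cauchyTransform μ (fun t => h t + h' t) z =
      cauchyTransform μ h z + cauchyTransform μ h' z := by
  simp only [cauchyTransform, add_div]
  exact integral_add (integrable_div_sub_ofReal hK hμ hh hz)
    (integrable_div_sub_ofReal hK hμ hh' hz)

lemma cauchyTransform_finsetSum {ι : Type*} {s : Finset ι} {h : ι → ℝ → ℂ} (hK : IsCompact K)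
    (hμ : ∀ᵐ t ∂μ, t ∈ K) (hh : ∀ i ∈ s, ContinuousOn (h i) K) (hz : z ∉ cpx K) :
    cauchyTransform μ (fun t => ∑ i ∈ s, h i t) z = ∑ i ∈ s, cauchyTransform μ (h i) z := by
  simp only [cauchyTransform, Finset.sum_div]
  exact integral_finsetSum s fun i hi => integrable_div_sub_ofReal hK hμ (hh i hi) hz

lemma mul_cauchyTransform (hK : IsCompact K) (hμ : ∀ᵐ t ∂μ, t ∈ K)
    (hh : ContinuousOn h K) (hz : z ∉ cpx K) :
    z * cauchyTransform μ h z = ∫ t, h t ∂μ + cauchyTransform μ (fun t => t * h t) z := by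
  have hth : ContinuousOn (fun t : ℝ => t * h t) K := ContinuousOn.mul (by fun_prop) hh
  rw [cauchyTransform, cauchyTransform, ← integral_const_mul,
    ← integral_add (integrable_of_continuousOn_of_ae_mem hK hμ hh)
      (integrable_div_sub_ofReal hK hμ hth hz)]
  refine integral_congr_ae (hμ.mono fun t ht => ?_)
  have := sub_ofReal_ne_zero_of_notMem_cpx hz ht
  field_simp
  ring

lemma sub_mul_cauchyTransform_div_sub (hK : IsCompact K) (hμ : ∀ᵐ t ∂μ, t ∈ K)
    (hh : ContinuousOn h K) (hs : s ∉ cpx K) (hz : z ∉ cpx K) :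
    (z - s) * cauchyTransform μ (fun t => h t / (t - s)) z =
      cauchyTransform μ h z - cauchyTransform μ h s := by
  simp only [cauchyTransform]
  rw [← integral_const_mul, ← integral_sub (integrable_div_sub_ofReal hK hμ hh hz)
    (integrable_div_sub_ofReal hK hμ hh hs)]
  refine integral_congr_ae (hμ.mono fun t ht => ?_)
  have h₁ := sub_ofReal_ne_zero_of_notMem_cpx hz ht
  have h₂ := sub_ofReal_ne_zero_of_notMem_cpx hs ht
  have h₃ := ofReal_sub_ne_zero_of_notMem_cpx hs ht
  field_simp
  ring

lemma integral_mul_cauchyTransform_eq_neg (hK : IsCompact K) (hμ : ∀ᵐ t ∂μ, t ∈ K)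
    (hL : IsCompact L) (hν : ∀ᵐ t ∂ν, t ∈ L) (hKL : Disjoint K L) {g u : ℝ → ℂ}
    (hg : ContinuousOn g K) (hu : ContinuousOn u L) :
    ∫ x, u x * cauchyTransform μ g x ∂ν = -∫ t, g t * cauchyTransform ν u t ∂μ := by
  have hsub : ∀ p ∈ L ×ˢ K, (p.1 : ℂ) - p.2 ≠ 0 := fun p hp hp0 =>
    hKL.ne_of_mem hp.2 hp.1 (Complex.ofReal_injective (sub_eq_zero.mp hp0)).symm
  calc ∫ x, u x * cauchyTransform μ g x ∂ν
      = ∫ x, ∫ t, u x * g t / ((x : ℂ) - t) ∂μ ∂ν := by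
        simp only [cauchyTransform, mul_div_assoc, integral_const_mul]
    _ = ∫ t, ∫ x, u x * g t / ((x : ℂ) - t) ∂ν ∂μ := by
        refine integral_integral_swap_of_continuousOn_of_ae_mem hL hν hK hμ ?_
        exact ((hu.comp continuousOn_fst fun _ hp => hp.1).mul
          (hg.comp continuousOn_snd fun _ hp => hp.2)).div (by fun_prop) hsub
    _ = -∫ t, g t * cauchyTransform ν u t ∂μ := by
        simp only [cauchyTransform, ← integral_neg, ← integral_const_mul]
        refine integral_congr_ae (.of_forall fun t => integral_congr_ae (.of_forall fun x => ?_))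
        dsimp only
        rw [← neg_sub (t : ℂ) x, div_neg]
        ring

end CauchyTransform

/-! ### Orthogonality to polynomials -/

lemma mem_degreeLT_zero_iff {R : Type*} [Semiring R] {p : R[X]} : p ∈ degreeLT R 0 ↔ p = 0 := by
  simp [mem_degreeLT, Nat.WithBot.lt_zero_iff]

lemma divByMonic_X_sub_C_mem_degreeLT {p : ℂ[X]} {n : ℕ} (hp : p ∈ degreeLT ℂ n)
    (s : ℂ) : p /ₘ (X - C s) ∈ degreeLT ℂ (n - 1) := by
  rw [mem_degreeLT] at hp ⊢
  rcases eq_or_ne (p /ₘ (X - C s)) 0 with h0 | h0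
  · simp [h0]
  · have hp0 : p ≠ 0 := by rintro rfl; simp at h0
    have hdeg : 1 ≤ p.natDegree := by
      by_contra hlt
      rw [Ne, divByMonic_eq_zero_iff (monic_X_sub_C s), degree_X_sub_C] at h0
      exact h0 ((natDegree_lt_iff_degree_lt hp0).mp (not_le.mp hlt))
    rw [← natDegree_lt_iff_degree_lt hp0] at hp
    rw [← natDegree_lt_iff_degree_lt h0, natDegree_divByMonic _ (monic_X_sub_C s),
      natDegree_X_sub_C]
    omega

lemma eval_eq_sub_mul_divByMonic_add (p : ℂ[X]) (s w : ℂ) :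
    p.eval w = (w - s) * (p /ₘ (X - C s)).eval w + p.eval s := by
  nth_rw 1 [← modByMonic_add_div p (X - C s), modByMonic_X_sub_C_eq_C_eval]
  simp [add_comm]

/-- `h` is orthogonal with respect to `μ` to every polynomial of degree less than `r`. -/
def Orth (μ : Measure ℝ) (r : ℕ) (h : ℝ → ℂ) : Prop :=
  ∀ p ∈ degreeLT ℂ r, ∫ t, p.eval (t : ℂ) * h t ∂μ = 0

section Orth

variable {K : Set ℝ} {μ : Measure ℝ} {h : ℝ → ℂ} {r : ℕ} {s : ℂ}

lemma orth_zero : Orth μ 0 h := fun p hp => by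
  simp [mem_degreeLT_zero_iff.mp hp]

lemma Orth.mono {r' : ℕ} (ho : Orth μ r h) (hr : r' ≤ r) : Orth μ r' h :=
  fun p hp => ho p (degreeLT_mono hr hp)

lemma Orth.const_mul (ho : Orth μ r h) (c : ℂ) : Orth μ r (fun t => c * h t) := fun p hp => by
  simp only [mul_left_comm _ c, integral_const_mul, ho p hp, mul_zero]

lemma orth_const_mul_iff {c : ℂ} (hc : c ≠ 0) : Orth μ r (fun t => c * h t) ↔ Orth μ r h :=
  ⟨fun ho => by simpa [hc] using ho.const_mul c⁻¹, fun ho => ho.const_mul c⟩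

variable [IsFiniteMeasure μ]

lemma orth_of_forall_pow (hK : IsCompact K) (hμ : ∀ᵐ t ∂μ, t ∈ K) (hh : ContinuousOn h K)
    (H : ∀ ν < r, ∫ t, (t : ℂ) ^ ν * h t ∂μ = 0) : Orth μ r h := by
  have hint (p : ℂ[X]) : Integrable (fun t : ℝ => p.eval (t : ℂ) * h t) μ :=
    integrable_of_continuousOn_of_ae_mem hK hμ (ContinuousOn.mul (by fun_prop) hh)
  intro p hp
  rw [degreeLT_eq_span_X_pow] at hp
  induction hp using Submodule.span_induction with
  | mem p hp =>
    obtain ⟨ν, hν, rfl⟩ : ∃ ν < r, X ^ ν = p := by simpa using hp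
    simpa using H ν hν
  | zero => simp
  | add p q _ _ hp hq => simp only [eval_add, add_mul, integral_add (hint p) (hint q), hp, hq,
      add_zero]
  | smul c p _ hp => simp only [eval_smul, smul_eq_mul, mul_assoc, integral_const_mul, hp,
      mul_zero]

lemma Orth.add {h' : ℝ → ℂ} (hK : IsCompact K) (hμ : ∀ᵐ t ∂μ, t ∈ K) (hh : ContinuousOn h K)
    (hh' : ContinuousOn h' K) (ho : Orth μ r h) (ho' : Orth μ r h') :
    Orth μ r (fun t => h t + h' t) := fun p hp => by
  simp only [mul_add]
  rw [integral_add, ho p hp, ho' p hp, add_zero] <;>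
  exact integrable_of_continuousOn_of_ae_mem hK hμ (ContinuousOn.mul (by fun_prop) ‹_›)

lemma Orth.div_sub (hK : IsCompact K) (hμ : ∀ᵐ t ∂μ, t ∈ K) (hh : ContinuousOn h K)
    (ho : Orth μ r h) (hs : s ∉ cpx K) (h0 : cauchyTransform μ h s = 0) :
    Orth μ (r + 1) (fun t => h t / (t - s)) := by
  intro p hp
  calc ∫ t, p.eval (t : ℂ) * (h t / (t - s)) ∂μ
      = ∫ t, ((p /ₘ (X - C s)).eval (t : ℂ) * h t - p.eval s * (h t / (s - t))) ∂μ := by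
        refine integral_congr_ae (hμ.mono fun t ht => ?_)
        have := ofReal_sub_ne_zero_of_notMem_cpx hs ht
        dsimp only
        rw [eval_eq_sub_mul_divByMonic_add p s t, ← neg_sub (t : ℂ) s, div_neg]
        field_simp
        ring
    _ = ∫ t, (p /ₘ (X - C s)).eval (t : ℂ) * h t ∂μ - p.eval s * cauchyTransform μ h s := by
        rw [integral_sub, integral_const_mul, cauchyTransform]
        · exact integrable_of_continuousOn_of_ae_mem hK hμ (ContinuousOn.mul (by fun_prop) hh)
        · exact (integrable_div_sub_ofReal hK hμ hh hs).const_mul _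
    _ = 0 := by rw [ho _ (divByMonic_X_sub_C_mem_degreeLT hp s), h0, mul_zero, sub_zero]

lemma exists_eval_mul_cauchyTransform_eq (hK : IsCompact K) (hμ : ∀ᵐ t ∂μ, t ∈ K)
    (hh : ContinuousOn h K) {n : ℕ} {p : ℂ[X]} (hp : p ∈ degreeLT ℂ n) :
    ∃ q ∈ degreeLT ℂ n, ∀ z ∉ cpx K, p.eval z * cauchyTransform μ h z =
      q.eval z + cauchyTransform μ (fun t => p.eval (t : ℂ) * h t) z := by
  induction n generalizing p h with
  | zero =>
    obtain rfl := mem_degreeLT_zero_iff.mp hp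
    exact ⟨0, zero_mem _, fun z _ => by simp [cauchyTransform]⟩
  | succ n ih =>
    have hp₁ := divByMonic_X_sub_C_mem_degreeLT hp 0
    have hp_eq := eval_eq_sub_mul_divByMonic_add p 0
    set p₁ := p /ₘ (X - C 0)
    have hth : ContinuousOn (fun t : ℝ => t * h t) K := ContinuousOn.mul (by fun_prop) hh
    have hpth : ContinuousOn (fun t : ℝ => p₁.eval (t : ℂ) * (t * h t)) K :=
      ContinuousOn.mul (by fun_prop) hth
    have hch : ContinuousOn (fun t : ℝ => p.eval 0 * h t) K := continuousOn_const.mul hh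
    obtain ⟨q, hq, hqz⟩ := ih hth hp₁
    refine ⟨(∫ t, h t ∂μ) • p₁ + q, degreeLT_mono n.le_succ
      (add_mem (Submodule.smul_mem _ _ hp₁) hq), fun z hz => ?_⟩
    calc p.eval z * cauchyTransform μ h z
        = p₁.eval z * (z * cauchyTransform μ h z) + p.eval 0 * cauchyTransform μ h z := by
          rw [hp_eq z]; ring
      _ = (∫ t, h t ∂μ) * p₁.eval z + q.eval z +
          (cauchyTransform μ (fun t => p₁.eval (t : ℂ) * (t * h t)) z +
            cauchyTransform μ (fun t => p.eval 0 * h t) z) := by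
          rw [mul_cauchyTransform hK hμ hh hz, mul_add, hqz z hz, cauchyTransform_const_mul]
          ring
      _ = ((∫ t, h t ∂μ) • p₁ + q).eval z +
          cauchyTransform μ (fun t => p.eval (t : ℂ) * h t) z := by
          rw [← cauchyTransform_add hK hμ hpth hch hz, eval_add, eval_smul, smul_eq_mul]
          congr 2 with t
          rw [hp_eq t]; ring

lemma Orth.cauchyTransform_mul {L : Set ℝ} {ν : Measure ℝ} [IsFiniteMeasure ν] {g u : ℝ → ℂ} {n : ℕ}
    (hK : IsCompact K) (hμ : ∀ᵐ t ∂μ, t ∈ K) (hL : IsCompact L) (hν : ∀ᵐ t ∂ν, t ∈ L)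
    (hKL : Disjoint K L) (hg : ContinuousOn g K) (hu : ContinuousOn u L) (ho : Orth μ r g)
    (ho' : Orth μ n (fun t => g t * cauchyTransform ν u t)) (hn : n ≤ r) :
    Orth ν n (fun x => cauchyTransform μ g x * u x) := by
  intro p hp
  obtain ⟨q, hq, hqz⟩ := exists_eval_mul_cauchyTransform_eq hL hν hu hp
  have hsplit : ∀ t ∈ K, g t * cauchyTransform ν (fun x => p.eval (x : ℂ) * u x) t =
      p.eval (t : ℂ) * (g t * cauchyTransform ν u t) - q.eval (t : ℂ) * g t := fun t ht => by
    have := hqz t (mt ofReal_mem_cpx.mp (hKL.notMem_of_mem_left ht))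
    linear_combination -g t * this
  have hgu : ContinuousOn (fun t => g t * cauchyTransform ν u t) K :=
    hg.mul (continuousOn_cauchyTransform_ofReal hL hν hu hKL.symm)
  calc ∫ x, p.eval (x : ℂ) * (cauchyTransform μ g x * u x) ∂ν
      = ∫ x, p.eval (x : ℂ) * u x * cauchyTransform μ g x ∂ν := by
        simp only [mul_assoc, mul_comm (u _)]
    _ = -∫ t, g t * cauchyTransform ν (fun x => p.eval (x : ℂ) * u x) t ∂μ :=
        integral_mul_cauchyTransform_eq_neg hK hμ hL hν hKL hg (ContinuousOn.mul (by fun_prop) hu)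
    _ = -∫ t, (p.eval (t : ℂ) * (g t * cauchyTransform ν u t) - q.eval (t : ℂ) * g t) ∂μ := by
        rw [integral_congr_ae (hμ.mono hsplit)]
    _ = 0 := by
        rw [integral_sub, ho' p hp, ho q (degreeLT_mono hn hq), sub_zero, neg_zero] <;>
        exact integrable_of_continuousOn_of_ae_mem hK hμ (ContinuousOn.mul (by fun_prop) ‹_›)

end Orth

/-! ### Real symmetry -/

/-- `F` is real symmetric: `F (z̄)` is the complex conjugate of `F z`. -/
def ConjSymm (F : ℂ → ℂ) : Prop := ∀ z, F (conj z) = conj (F z)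

lemma ConjSymm.ofReal_re {F : ℂ → ℂ} (hF : ConjSymm F) (x : ℝ) : ((F x).re : ℂ) = F x :=
  Complex.conj_eq_iff_re.mp (by rw [← hF, Complex.conj_ofReal])

lemma ConjSymm.deriv {F : ℂ → ℂ} (hF : ConjSymm F) : ConjSymm (deriv F) := fun z => by
  have hconj : conj ∘ F ∘ conj = F := funext fun w => by simp [hF w]
  have := congrFun (deriv_conj_conj (f := F)) (conj z)
  simpa [hconj] using this

lemma ConjSymm.iteratedDeriv {F : ℂ → ℂ} (hF : ConjSymm F) (i : ℕ) :
    ConjSymm (iteratedDeriv i F) := by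
  induction i with
  | zero => simpa
  | succ i ih => simpa [iteratedDeriv_succ] using ih.deriv

lemma ConjSymm.const_mul {F : ℂ → ℂ} (hF : ConjSymm F) (c : ℝ) :
    ConjSymm (fun z => c * F z) := fun z => by simp [hF z]

lemma ConjSymm.mul {F G : ℂ → ℂ} (hF : ConjSymm F) (hG : ConjSymm G) :
    ConjSymm (fun z => F z * G z) := fun z => by simp [hF z, hG z]

lemma ConjSymm.add {F G : ℂ → ℂ} (hF : ConjSymm F) (hG : ConjSymm G) :
    ConjSymm (fun z => F z + G z) := fun z => by simp [hF z, hG z]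

lemma conjSymm_aeval (p : ℝ[X]) : ConjSymm (fun z => aeval z p) := fun z =>
  Polynomial.aeval_conj p z

lemma conjSymm_finsetSum {ι : Type*} {F : ι → ℂ → ℂ} (s : Finset ι)
    (hF : ∀ i ∈ s, ConjSymm (F i)) : ConjSymm (fun z => ∑ i ∈ s, F i z) := fun z => by
  rw [map_sum]
  exact Finset.sum_congr rfl fun i hi => hF i hi z

lemma conjSymm_cauchyTransform (μ : Measure ℝ) {G : ℂ → ℂ} (hG : ConjSymm G) :
    ConjSymm (cauchyTransform μ (fun t => G t)) := fun z => by
  rw [cauchyTransform, cauchyTransform, ← integral_conj]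
  refine integral_congr_ae (.of_forall fun t => ?_)
  simp [← hG t]

lemma conj_mem_cpx_iff {s : Set ℝ} {z : ℂ} : conj z ∈ cpx s ↔ z ∈ cpx s := by
  suffices h : ∀ z ∈ cpx s, conj z ∈ cpx s from
    ⟨fun hz => by simpa using h _ hz, h z⟩
  rintro _ ⟨x, hx, rfl⟩
  exact ⟨x, hx, (Complex.conj_ofReal x).symm⟩

/-! ### Zeros counted with multiplicity -/

/-- `f` vanishes at every point of `M` at least to the order given by its multiplicity in `M`,
the order being measured, as in `CZerosLE`, through iterated derivatives. -/
def HasZeros (f : ℂ → ℂ) (M : Multiset ℂ) : Prop :=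
  ∀ s, ∀ i < M.count s, iteratedDeriv i f s = 0

section Zeros

variable {f g : ℂ → ℂ} {D : Set ℂ} {N : ℕ} {M : Multiset ℂ}

lemma czerosLT_iff : CZerosLT f D N ↔
    ∀ M : Multiset ℂ, (∀ s ∈ M, s ∈ D) → HasZeros f M → M.card < N := by
  constructor
  · intro h M hM hz
    rw [← Multiset.toFinset_sum_count_eq]
    exact h M.toFinset M.count (fun s hs => hM s (Multiset.mem_toFinset.mp hs))
      fun s _ => hz s
  · intro h S ord hS hz
    have hcount (s : ℂ) : (∑ x ∈ S, Multiset.replicate (ord x) x).count s =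
        if s ∈ S then ord s else 0 := by
      simp [Multiset.count_sum', Multiset.count_replicate]
    have hmem : ∀ s ∈ ∑ x ∈ S, Multiset.replicate (ord x) x, s ∈ S := fun s hs => by
      by_contra hsS
      exact (Multiset.count_pos.mpr hs).ne' (by rw [hcount, if_neg hsS])
    simpa using h _ (fun s hs => hS (hmem s hs)) fun s i hi => by
      have hs : s ∈ S := hmem s (Multiset.count_pos.mp (by omega))
      rw [hcount, if_pos hs] at hi
      exact hz s hs i hi

lemma CZerosLT.mono {N' : ℕ} (h : CZerosLT f D N) (hN : N ≤ N') : CZerosLT f D N' :=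
  fun S ord hS hz => (h S ord hS hz).trans_le hN

lemma CZerosLT.czerosLE {N' : ℕ} (h : CZerosLT f D N) (hN : N ≤ N' + 1) : CZerosLE f D N' :=
  fun S ord hS hz => Nat.lt_succ_iff.mp ((h S ord hS hz).trans_le hN)

lemma CZerosLT.anti {D' : Set ℂ} (h : CZerosLT f D N) (hD : D' ⊆ D) : CZerosLT f D' N :=
  fun S ord hS => h S ord (hS.trans hD)

lemma hasZeros_cons {s : ℂ} :
    HasZeros f (s ::ₘ M) ↔ HasZeros f M ∧ iteratedDeriv (M.count s) f s = 0 := by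
  simp only [HasZeros, Multiset.count_cons]
  constructor
  · exact fun h => ⟨fun t i hi => h t i (by omega), h s _ (by simp)⟩
  · rintro ⟨h, hs⟩ t i hi
    rcases eq_or_ne t s with rfl | hts
    · rcases Nat.lt_succ_iff_lt_or_eq.mp (by simpa using hi) with hi | rfl
      exacts [h t i hi, hs]
    · exact h t i (by simpa [hts] using hi)

lemma hasZeros_of_nodup (hM : M.Nodup) (h : ∀ s ∈ M, f s = 0) : HasZeros f M :=
  fun s i hi => by
    have h1 := Multiset.nodup_iff_count_le_one.mp hM s
    obtain rfl : i = 0 := by omega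
    simpa using h s (Multiset.count_pos.mp hi)

lemma HasZeros.congr (h : HasZeros f M) (hfg : ∀ s ∈ M, f =ᶠ[𝓝 s] g) : HasZeros g M :=
  fun s i hi => (h s i hi).symm ▸
    ((hfg s (Multiset.count_pos.mp (by omega))).iteratedDeriv_eq i).symm

lemma HasZeros.count_le_analyticOrderAt {s : ℂ} (h : HasZeros f M) (hf : AnalyticAt ℂ f s) :
    (M.count s : ℕ∞) ≤ analyticOrderAt f s :=
  (natCast_le_analyticOrderAt_iff_iteratedDeriv_eq_zero hf).mpr (h s)

lemma HasZeros.union_map_conj (h : HasZeros f M) (hf : ConjSymm f) :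
    HasZeros f (M ∪ M.map conj) := fun s i hi => by
  rw [Multiset.count_union, lt_max_iff] at hi
  rcases hi with hi | hi
  · exact h s i hi
  · have hcount : (M.map conj).count s = M.count (conj s) := by
      simpa using Multiset.count_map_eq_count' conj M (starRingEnd ℂ).injective (conj s)
    simpa using (hf.iteratedDeriv i (conj s)).trans (by simp [h (conj s) i (hcount ▸ hi)])

end Zeros

/-! ### Dividing out the zeros of a Cauchy transform -/

lemma analyticOrderAt_eq_add_ite {F F₁ : ℂ → ℂ} {s w : ℂ} (hF₁ : AnalyticAt ℂ F₁ w)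
    (h : F =ᶠ[𝓝 w] fun z => (z - s) * F₁ z) :
    analyticOrderAt F w = analyticOrderAt F₁ w + if w = s then 1 else 0 := by
  have hid : AnalyticAt ℂ (fun z => z - s) w := by fun_prop
  rw [analyticOrderAt_congr h, ← Pi.mul_def, analyticOrderAt_mul hid hF₁, add_comm]
  split_ifs with hws
  · subst hws
    rw [analyticOrderAt_id_sub_const_self]
  · rw [analyticOrderAt_id_sub_const_of_ne hws]

section Division

variable {K : Set ℝ} {μ : Measure ℝ} [IsFiniteMeasure μ] {h : ℝ → ℂ} {q : ℂ[X]} {s z : ℂ}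
  {d r : ℕ} {M : Multiset ℂ}

lemma analyticAt_eval_add_cauchyTransform (hK : IsCompact K) (hμ : ∀ᵐ t ∂μ, t ∈ K)
    (hh : ContinuousOn h K) (q : ℂ[X]) (hz : z ∉ cpx K) :
    AnalyticAt ℂ (fun z => q.eval z + cauchyTransform μ h z) z :=
  (q.differentiable.analyticAt z).add (analyticAt_cauchyTransform hK hμ hh hz)

lemma eval_add_cauchyTransform_eq_sub_mul (hK : IsCompact K) (hμ : ∀ᵐ t ∂μ, t ∈ K)
    (hh : ContinuousOn h K) (hs : s ∉ cpx K) (h0 : q.eval s + cauchyTransform μ h s = 0)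
    (hz : z ∉ cpx K) :
    q.eval z + cauchyTransform μ h z = (z - s) *
      ((q /ₘ (X - C s)).eval z + cauchyTransform μ (fun t => h t / (t - s)) z) := by
  rw [mul_add, sub_mul_cauchyTransform_div_sub hK hμ hh hs hz,
    eval_eq_sub_mul_divByMonic_add q s z]
  linear_combination h0

-- Each division lowers the degree of the polynomial part; once that part is exhausted, it
-- raises the order of orthogonality instead.
lemma Orth.div_prod_sub (hK : IsCompact K) (hμ : ∀ᵐ t ∂μ, t ∈ K) (hh : ContinuousOn h K)
    (ho : Orth μ r h) (hq : q ∈ degreeLT ℂ d) (hdr : d = 0 ∨ r = 0)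
    (hM : ∀ s ∈ M, s ∉ cpx K)
    (hz : ∀ s ∈ M, (M.count s : ℕ∞) ≤
      analyticOrderAt (fun z => q.eval z + cauchyTransform μ h z) s) :
    Orth μ (r + M.card - d) (fun t => h t / (M.map fun s => (t : ℂ) - s).prod) := by
  induction M using Multiset.induction generalizing d r h q with
  | empty => simpa using ho.mono (by omega : r - d ≤ r)
  | cons s M ih =>
    have hs : s ∉ cpx K := hM s (Multiset.mem_cons_self s M)
    have hsM : ∀ w ∈ M, w ∉ cpx K := fun w hw => hM w (Multiset.mem_cons_of_mem hw)
    have hh₁ := continuousOn_div_ofReal_sub hh hs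
    have h0 : q.eval s + cauchyTransform μ h s = 0 := by
      by_contra h0
      have := hz s (Multiset.mem_cons_self s M)
      rw [(analyticAt_eval_add_cauchyTransform hK hμ hh q hs).analyticOrderAt_eq_zero.mpr h0]
        at this
      simp at this
    have ho₁ : Orth μ (r + 1 - d) (fun t => h t / (t - s)) := by
      rcases d.eq_zero_or_pos with rfl | hd
      · obtain rfl := mem_degreeLT_zero_iff.mp hq
        exact ho.div_sub hK hμ hh hs (by simpa using h0)
      · rw [show r + 1 - d = 0 by omega]
        exact orth_zero
    have hz₁ : ∀ w ∈ M, (M.count w : ℕ∞) ≤ analyticOrderAt (fun z => (q /ₘ (X - C s)).eval z +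
        cauchyTransform μ (fun t => h t / (t - s)) z) w := fun w hw => by
      have hF : (fun z => q.eval z + cauchyTransform μ h z) =ᶠ[𝓝 w] _ :=
        ((isClosed_cpx hK).isOpen_compl.eventually_mem (hsM w hw)).mono fun z hz =>
          eval_add_cauchyTransform_eq_sub_mul hK hμ hh hs h0 hz
      have := hz w (Multiset.mem_cons_of_mem hw)
      rw [analyticOrderAt_eq_add_ite
        (analyticAt_eval_add_cauchyTransform hK hμ hh₁ _ (hsM w hw)) hF,
        Multiset.count_cons] at this
      split_ifs at this <;> simpa using this
    convert ih hh₁ ho₁ (divByMonic_X_sub_C_mem_degreeLT hq s) (by omega) hsM hz₁ using 1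
    · rw [Multiset.card_cons]; omega
    · funext t
      rw [Multiset.map_cons, Multiset.prod_cons, div_div]

end Division

/-! ### Sign changes -/

section SignChanges

variable {f g : ℝ → ℝ} {a b x : ℝ}

lemma signChangeAt_iff_frequently :
    SignChangeAt f x ↔ (∃ᶠ y in 𝓝 x, 0 < f y) ∧ ∃ᶠ y in 𝓝 x, f y < 0 := by
  simp only [Metric.nhds_basis_ball.frequently_iff, Metric.mem_ball, Real.dist_eq]
  constructor
  · refine fun h => ⟨fun δ hδ => ?_, fun δ hδ => ?_⟩ <;>
    obtain ⟨u, v, hu, hv, huv⟩ := h δ hδ <;>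
    rcases mul_neg_iff.mp huv with ⟨h₁, h₂⟩ | ⟨h₁, h₂⟩
    exacts [⟨u, hu, h₁⟩, ⟨v, hv, h₂⟩, ⟨v, hv, h₂⟩, ⟨u, hu, h₁⟩]
  · rintro ⟨hpos, hneg⟩ δ hδ
    obtain ⟨u, hu, hfu⟩ := hpos δ hδ
    obtain ⟨v, hv, hfv⟩ := hneg δ hδ
    exact ⟨u, v, hu, hv, mul_neg_of_pos_of_neg hfu hfv⟩

lemma not_signChangeAt_iff_eventually :
    ¬SignChangeAt f x ↔ (∀ᶠ y in 𝓝 x, f y ≤ 0) ∨ ∀ᶠ y in 𝓝 x, 0 ≤ f y := by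
  simp [signChangeAt_iff_frequently, imp_iff_not_or]

lemma SignChangeAt.eq_zero (h : SignChangeAt f x) (hf : ContinuousAt f x) : f x = 0 := by
  by_contra hx
  refine not_signChangeAt_iff_eventually.mpr ?_ h
  rcases lt_or_gt_of_ne hx with hx | hx
  · exact .inl ((hf.eventually_lt_const hx).mono fun _ => le_of_lt)
  · exact .inr ((hf.eventually_const_lt hx).mono fun _ => le_of_lt)

lemma SignChangeAt.of_mul (h : SignChangeAt (fun y => f y * g y) x) (hg : ContinuousAt g x)
    (hx : g x ≠ 0) : SignChangeAt f x := by
  contrapose! h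
  simp only [not_signChangeAt_iff_eventually] at h ⊢
  rcases lt_or_gt_of_ne hx with hx | hx
  · have hg' := hg.eventually_lt_const hx
    exact h.symm.imp
      (fun h => (h.and hg').mono fun y hy => mul_nonpos_of_nonneg_of_nonpos hy.1 hy.2.le)
      fun h => (h.and hg').mono fun y hy => mul_nonneg_of_nonpos_of_nonpos hy.1 hy.2.le
  · have hg' := hg.eventually_const_lt hx
    exact h.imp
      (fun h => (h.and hg').mono fun y hy => mul_nonpos_of_nonpos_of_nonneg hy.1 hy.2.le)
      fun h => (h.and hg').mono fun y hy => mul_nonneg hy.1 hy.2.le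

lemma forall_nonpos_or_forall_nonneg_of_not_signChangeAt
    (h : ∀ x ∈ Ioo a b, ¬SignChangeAt f x) (hfin : {x ∈ Ioo a b | f x = 0}.Finite) :
    (∀ x ∈ Ioo a b, f x ≤ 0) ∨ ∀ x ∈ Ioo a b, 0 ≤ f x := by
  refine (isPreconnected_iff_subset_of_disjoint.mp isPreconnected_Ioo
    {x | ∀ᶠ y in 𝓝 x, f y ≤ 0} {x | ∀ᶠ y in 𝓝 x, 0 ≤ f y} isOpen_setOfPred_eventually_nhds
    isOpen_setOfPred_eventually_nhds
    (fun x hx => not_signChangeAt_iff_eventually.mp (h x hx)) ?_).imp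
    (fun h x hx => (h hx).self_of_nhds) fun h x hx => (h hx).self_of_nhds
  refine eq_empty_of_forall_notMem fun x ⟨hx, hneg, hpos⟩ => infinite_of_mem_nhds x ?_ hfin
  filter_upwards [isOpen_Ioo.mem_nhds hx, hneg, hpos] with y hy hy₁ hy₂
  exact ⟨hy, le_antisymm hy₁ hy₂⟩

lemma eventually_nhds_of_eventually_nhdsLT_of_eventually_nhdsGT {p : ℝ → Prop} (hx : p x)
    (hl : ∀ᶠ y in 𝓝[<] x, p y) (hr : ∀ᶠ y in 𝓝[>] x, p y) : ∀ᶠ y in 𝓝 x, p y := by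
  rw [← nhdsNE_sup_pure, ← nhdsLT_sup_nhdsGT]
  exact eventually_sup.mpr ⟨eventually_sup.mpr ⟨hl, hr⟩, hx⟩

lemma SignChangeAt.not_mul_sub (h : SignChangeAt f x) (hf : ∀ᶠ y in 𝓝 x, ContinuousAt f y)
    (h0 : ∀ᶠ y in 𝓝[≠] x, f y ≠ 0) : ¬SignChangeAt (fun y => f y * (y - x)) x := by
  have hfx := h.eq_zero hf.self_of_nhds
  obtain ⟨l, u, ⟨hl, hu⟩, hlu⟩ := mem_nhds_iff_exists_Ioo_subset.mp
    (hf.and (eventually_nhdsWithin_iff.mp h0))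
  have hside : ∀ c d, Ioo c d ⊆ Ioo l u → x ∉ Ioo c d →
      (∀ y ∈ Ioo c d, f y ≤ 0) ∨ ∀ y ∈ Ioo c d, 0 ≤ f y := fun c d hcd hx => by
    have hne : ∀ y ∈ Ioo c d, f y ≠ 0 := fun y hy =>
      (hlu (hcd hy)).2 (by rintro rfl; exact hx hy)
    refine forall_nonpos_or_forall_nonneg_of_not_signChangeAt
      (fun y hy hs => hne y hy (hs.eq_zero (hlu (hcd hy)).1)) ?_
    exact finite_empty.subset fun y hy => hne y hy.1 hy.2
  have hL : ∀ᶠ y in 𝓝[<] x, y ∈ Ioo l x := Ioo_mem_nhdsLT hl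
  have hR : ∀ᶠ y in 𝓝[>] x, y ∈ Ioo x u := Ioo_mem_nhdsGT hu
  rw [not_signChangeAt_iff_eventually]
  rcases hside l x (Ioo_subset_Ioo_right hu.le) (by simp) with hl' | hl' <;>
  rcases hside x u (Ioo_subset_Ioo_left hl.le) (by simp) with hr' | hr'
  · exact absurd h (not_signChangeAt_iff_eventually.mpr (.inl
      (eventually_nhds_of_eventually_nhdsLT_of_eventually_nhdsGT hfx.le (hL.mono hl')
        (hR.mono hr'))))
  · exact .inr (eventually_nhds_of_eventually_nhdsLT_of_eventually_nhdsGT (by simp)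
      (hL.mono fun y hy => mul_nonneg_of_nonpos_of_nonpos (hl' y hy) (by linarith [hy.2]))
      (hR.mono fun y hy => mul_nonneg (hr' y hy) (by linarith [hy.1])))
  · exact .inl (eventually_nhds_of_eventually_nhdsLT_of_eventually_nhdsGT (by simp)
      (hL.mono fun y hy => mul_nonpos_of_nonneg_of_nonpos (hl' y hy) (by linarith [hy.2]))
      (hR.mono fun y hy => mul_nonpos_of_nonpos_of_nonneg (hr' y hy) (by linarith [hy.1])))
  · exact absurd h (not_signChangeAt_iff_eventually.mpr (.inr
      (eventually_nhds_of_eventually_nhdsLT_of_eventually_nhdsGT hfx.ge (hL.mono hl')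
        (hR.mono hr'))))

lemma not_signChangeAt_mul_prod_sub {T : Finset ℝ} (hf : ContinuousOn f (Icc a b))
    (hfin : {x ∈ Icc a b | f x = 0}.Finite) (hx : x ∈ Ioo a b)
    (hT : x ∈ T ↔ SignChangeAt f x) : ¬SignChangeAt (fun y => f y * ∏ t ∈ T, (y - t)) x := by
  have hprod (T : Finset ℝ) : ContinuousAt (fun y => ∏ t ∈ T, (y - t)) x := by fun_prop
  by_cases hxT : x ∈ T
  · have hcont : ∀ᶠ y in 𝓝 x, ContinuousAt f y :=
      (isOpen_Ioo.eventually_mem hx).mono fun y hy => hf.continuousAt (Icc_mem_nhds hy.1 hy.2)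
    have hne : ∀ᶠ y in 𝓝[≠] x, f y ≠ 0 := by
      filter_upwards [nhdsNE_le_cofinite x hfin.compl_mem_cofinite,
        nhdsWithin_le_nhds (Icc_mem_nhds hx.1 hx.2)] with y hy hyab h0 using hy ⟨hyab, h0⟩
    simp only [← Finset.mul_prod_erase T _ hxT, ← mul_assoc]
    exact fun hs => (hT.mp hxT).not_mul_sub hcont hne
      (hs.of_mul (hprod _) (Finset.prod_ne_zero_iff.mpr fun t ht =>
        sub_ne_zero.mpr (Finset.ne_of_mem_erase ht).symm))
  · exact fun hs => hxT (hT.mpr (hs.of_mul (hprod T) (Finset.prod_ne_zero_iff.mpr fun t ht =>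
      sub_ne_zero.mpr (by rintro rfl; exact hxT ht))))

lemma exists_finset_signChangeAt_mul_prod_sub (hab : a < b) (hf : ContinuousOn f (Icc a b))
    (hfin : {x ∈ Icc a b | f x = 0}.Finite) :
    ∃ T : Finset ℝ, ↑T ⊆ Ioo a b ∧ (∀ x ∈ T, SignChangeAt f x) ∧
      ((∀ x ∈ Icc a b, f x * ∏ t ∈ T, (x - t) ≤ 0) ∨
        ∀ x ∈ Icc a b, 0 ≤ f x * ∏ t ∈ T, (x - t)) := by
  have hTfin : {x ∈ Ioo a b | SignChangeAt f x}.Finite := hfin.subset fun x hx =>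
    ⟨Ioo_subset_Icc_self hx.1, hx.2.eq_zero (hf.continuousAt (Icc_mem_nhds hx.1.1 hx.1.2))⟩
  lift {x ∈ Ioo a b | SignChangeAt f x} to Finset ℝ using hTfin with T hT
  have hmem (x : ℝ) : x ∈ T ↔ x ∈ Ioo a b ∧ SignChangeAt f x := by
    rw [← Finset.mem_coe, hT, mem_ofPred_eq]
  have hcont : ContinuousOn (fun x => f x * ∏ t ∈ T, (x - t)) (closure (Ioo a b)) := by
    rw [closure_Ioo hab.ne]
    exact hf.mul (by fun_prop)
  have hzeros : {x ∈ Ioo a b | f x * ∏ t ∈ T, (x - t) = 0}.Finite := by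
    refine (hfin.union T.finite_toSet).subset fun x ⟨hx, h0⟩ => ?_
    rcases mul_eq_zero.mp h0 with h0 | h0
    · exact .inl ⟨Ioo_subset_Icc_self hx, h0⟩
    · obtain ⟨t, ht, hxt⟩ := Finset.prod_eq_zero_iff.mp h0
      exact .inr (sub_eq_zero.mp hxt ▸ ht)
  refine ⟨T, fun x hx => ((hmem x).mp hx).1, fun x hx => ((hmem x).mp hx).2, ?_⟩
  rw [← closure_Ioo hab.ne]
  refine (forall_nonpos_or_forall_nonneg_of_not_signChangeAt (fun x hx =>
    not_signChangeAt_mul_prod_sub hf hfin hx (by simp [hmem, hx])) hzeros).imp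
    (fun h x hx => le_on_closure h hcont continuousOn_const hx)
    fun h x hx => le_on_closure h continuousOn_const hcont hx

/-- `f` changes sign at `N` or more points of the open interval `(a, b)`. -/
def SignChangesGE (f : ℝ → ℝ) (a b : ℝ) (N : ℕ) : Prop :=
  ∃ T : Finset ℝ, ↑T ⊆ Ioo a b ∧ N ≤ T.card ∧ ∀ x ∈ T, SignChangeAt f x

lemma SignChangesGE.mono {N N' : ℕ} (h : SignChangesGE f a b N) (hN : N' ≤ N) :
    SignChangesGE f a b N' :=
  let ⟨T, hT, hcard, hs⟩ := h
  ⟨T, hT, hN.trans hcard, hs⟩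

lemma SignChangesGE.of_mul {N : ℕ} (h : SignChangesGE (fun x => f x * g x) a b N)
    (hg : ContinuousOn g (Icc a b)) (hg0 : ∀ x ∈ Icc a b, g x ≠ 0) : SignChangesGE f a b N :=
  let ⟨T, hT, hcard, hs⟩ := h
  ⟨T, hT, hcard, fun x hx => (hs x hx).of_mul
    (hg.continuousAt (Icc_mem_nhds (hT hx).1 (hT hx).2)) (hg0 x (Ioo_subset_Icc_self (hT hx)))⟩

lemma ae_eq_zero_of_integral_eq_zero_of_nonpos_or_nonneg {α : Type*} [MeasurableSpace α]
    {μ : Measure α} {f : α → ℝ} (hf : Integrable f μ) (h0 : ∫ x, f x ∂μ = 0)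
    (hs : (∀ᵐ x ∂μ, f x ≤ 0) ∨ ∀ᵐ x ∂μ, 0 ≤ f x) : ∀ᵐ x ∂μ, f x = 0 := by
  rcases hs with hs | hs
  · have := (integral_eq_zero_iff_of_nonneg_ae (f := -f) (hs.mono fun x hx => neg_nonneg.mpr hx)
      hf.neg).mp (by simpa [integral_neg] using h0)
    exact this.mono fun x hx => neg_eq_zero.mp hx
  · exact (integral_eq_zero_iff_of_nonneg_ae hs hf).mp h0

-- Multiplying `f` by the polynomial vanishing at its sign changes makes the integrand of
-- constant sign, so the polynomial cannot be orthogonal to `f`.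
lemma signChangesGE_of_orth {μ : Measure ℝ} [IsFiniteMeasure μ] {r : ℕ}
    (hull : convexHull ℝ (msupport μ) = Icc a b) (inf : (msupport μ).Infinite)
    (hf : ContinuousOn f (Icc a b)) (hfin : {x ∈ Icc a b | f x = 0}.Finite)
    (ho : Orth μ r (fun t => f t)) : SignChangesGE f a b r := by
  have hμ := ae_mem_of_convexHull_msupport_eq hull
  obtain ⟨T, hT, hs, hsign⟩ := exists_finset_signChangeAt_mul_prod_sub
    (lt_of_infinite_of_convexHull_eq_Icc inf hull) hf hfin
  refine ⟨T, hT, ?_, hs⟩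
  by_contra! hcard
  have hint : ∫ x, f x * ∏ t ∈ T, (x - t) ∂μ = 0 := by
    have hP : ∏ t ∈ T, (X - C (t : ℂ)) ∈ degreeLT ℂ r := by
      rw [mem_degreeLT, degree_prod]
      simpa [degree_X_sub_C] using hcard
    have := ho _ hP
    simp only [eval_prod, eval_sub, eval_X, eval_C, mul_comm (Finset.prod _ _)] at this
    exact_mod_cast this
  have hae := ae_eq_zero_of_integral_eq_zero_of_nonpos_or_nonneg
    (integrable_of_continuousOn_of_ae_mem isCompact_Icc hμ (hf.mul (by fun_prop))) hint
    (hsign.imp (fun h => hμ.mono h) fun h => hμ.mono h)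
  refine inf (((hfin.union T.finite_toSet).subset
    (msupport_subset_of_ae_mem (hfin.union T.finite_toSet).isClosed ?_)))
  filter_upwards [hμ, hae] with x hx h0
  rcases mul_eq_zero.mp h0 with h0 | h0
  · exact .inl ⟨hx, h0⟩
  · obtain ⟨t, ht, hxt⟩ := Finset.prod_eq_zero_iff.mp h0
    exact .inr (sub_eq_zero.mp hxt ▸ ht)

end SignChanges

/-! ### Zeros of a Cauchy transform force sign changes of its density -/

section Transfer

variable {μ : Measure ℝ} [IsFiniteMeasure μ] {a b e : ℝ} {F G : ℂ → ℂ} {q : ℂ[X]} {d r : ℕ}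

lemma conj_prod_map_ofReal_sub {M : Multiset ℂ} (hM : M.map conj = M) (t : ℝ) :
    conj (M.map fun s => (t : ℂ) - s).prod = (M.map fun s => (t : ℂ) - s).prod := by
  conv_rhs => rw [← hM]
  simp [map_multiset_prod, Multiset.map_map]

lemma continuous_prod_map_ofReal_sub (M : Multiset ℂ) :
    Continuous fun t : ℝ => (M.map fun s => (t : ℂ) - s).prod :=
  continuous_multiset_prod M fun s _ => by fun_prop

lemma prod_map_ofReal_sub_ne_zero {M : Multiset ℂ} {s : Set ℝ} (hM : ∀ z ∈ M, z ∉ cpx s) {t : ℝ}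
    (ht : t ∈ s) : (M.map fun z => (t : ℂ) - z).prod ≠ 0 := by
  rw [Ne, Multiset.prod_eq_zero_iff, Multiset.mem_map]
  rintro ⟨z, hz, h0⟩
  exact ofReal_sub_ne_zero_of_notMem_cpx (hM z hz) ht h0

lemma signChangesGE_of_orth_div_prod_sub {M : Multiset ℂ}
    (hull : convexHull ℝ (msupport μ) = Icc a b) (inf : (msupport μ).Infinite) {g : ℝ → ℝ}
    (hg : ContinuousOn g (Icc a b)) (hfin : {x ∈ Icc a b | g x = 0}.Finite)
    (hM : ∀ s ∈ M, s ∉ cpx (Icc a b)) (hMconj : M.map conj = M)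
    (ho : Orth μ r (fun t => g t / (M.map fun s => (t : ℂ) - s).prod)) :
    SignChangesGE g a b r := by
  set W : ℝ → ℝ := fun t => ((M.map fun s => (t : ℂ) - s).prod).re
  have hWre (t : ℝ) : (W t : ℂ) = (M.map fun s => (t : ℂ) - s).prod :=
    Complex.conj_eq_iff_re.mp (conj_prod_map_ofReal_sub hMconj t)
  have hW0 : ∀ t ∈ Icc a b, (W t)⁻¹ ≠ 0 := fun t ht =>
    inv_ne_zero fun h0 => prod_map_ofReal_sub_ne_zero hM ht (by rw [← hWre, h0]; simp)
  have hWc : ContinuousOn (fun t => (W t)⁻¹) (Icc a b) :=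
    ((Complex.continuous_re.comp (continuous_prod_map_ofReal_sub M)).continuousOn).inv₀
      fun t ht h0 => hW0 t ht (by simpa using h0)
  refine (signChangesGE_of_orth (f := fun t => g t * (W t)⁻¹) hull inf (hg.mul hWc)
    (hfin.subset ?_) ?_).of_mul hWc hW0
  · exact fun t ⟨ht, h0⟩ => ⟨ht, (mul_eq_zero.mp h0).resolve_right (hW0 t ht)⟩
  · simpa [hWre, div_eq_mul_inv] using ho

-- Adjoining the conjugate zeros makes the product of the factors `t - s` real on the line.
lemma signChangesGE_of_hasZeros {M : Multiset ℂ}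
    (hull : convexHull ℝ (msupport μ) = Icc a b) (inf : (msupport μ).Infinite) {g : ℝ → ℝ}
    (hg : ContinuousOn g (Icc a b)) (hfin : {x ∈ Icc a b | g x = 0}.Finite)
    (hF : ConjSymm F) (hq : q ∈ degreeLT ℂ d)
    (hFq : EqOn F (fun z => q.eval z + cauchyTransform μ (fun t => g t) z) (cpx (Icc a b))ᶜ)
    (hdr : d = 0 ∨ r = 0) (ho : Orth μ r (fun t => g t))
    (hM : ∀ s ∈ M, s ∉ cpx (Icc a b)) (hz : HasZeros F M) :
    SignChangesGE g a b (r + M.card - d) := by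
  have hK : IsCompact (Icc a b) := isCompact_Icc
  have hμ := ae_mem_of_convexHull_msupport_eq hull
  have hgc : ContinuousOn (fun t => (g t : ℂ)) (Icc a b) := by fun_prop
  have hM' : ∀ s ∈ M ∪ M.map conj, s ∉ cpx (Icc a b) := fun s hs => by
    rcases Multiset.mem_union.mp hs with hs | hs
    · exact hM s hs
    · obtain ⟨w, hw, rfl⟩ := Multiset.mem_map.mp hs
      exact mt conj_mem_cpx_iff.mp (hM w hw)
  have hMconj : (M ∪ M.map conj).map conj = M ∪ M.map conj := by
    simp [Multiset.map_union (starRingEnd ℂ).injective, Multiset.map_map, Multiset.union_comm]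
  have hz' : HasZeros (fun z => q.eval z + cauchyTransform μ (fun t => g t) z) (M ∪ M.map conj) :=
    (hz.union_map_conj hF).congr fun s hs => hFq.eventuallyEq_of_mem
      ((isClosed_cpx hK).isOpen_compl.mem_nhds (hM' s hs))
  refine (signChangesGE_of_orth_div_prod_sub hull inf hg hfin hM' hMconj
    (ho.div_prod_sub hK hμ hgc hq hdr hM' fun s hs => hz'.count_le_analyticOrderAt
      (analyticAt_eval_add_cauchyTransform hK hμ hgc q (hM' s hs)))).mono ?_
  have := Multiset.card_le_card (Multiset.le_union_left (s := M) (t := M.map conj))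
  omega

lemma finite_setOf_zero_of_czerosLT {N : ℕ} {s : Set ℝ} (h : CZerosLT G (cpx s) N) :
    {x ∈ s | G x = 0}.Finite := by
  by_contra hinf
  obtain ⟨T, hT, hcard⟩ := Set.Infinite.exists_subset_card_eq hinf N
  have := czerosLT_iff.mp h (T.val.map (↑)) (by simpa using fun x hx => (hT hx).1)
    (hasZeros_of_nodup (T.nodup.map Complex.ofReal_injective)
      (by simpa using fun x hx => (hT hx).2))
  simp [hcard] at this

lemma SignChangesGE.exists_hasZeros {N : ℕ} (h : SignChangesGE (fun x => (G x).re) a b N)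
    (hG : ConjSymm G) (hc : ContinuousOn (fun x : ℝ => G x) (Icc a b)) :
    ∃ M : Multiset ℂ, M.Nodup ∧
      (∀ s ∈ M, s ∈ cpx {x ∈ Ioo a b | SignChangeAt (fun x => (G x).re) x}) ∧
      HasZeros G M ∧ N ≤ M.card := by
  obtain ⟨T, hT, hcard, hs⟩ := h
  have hM : (T.val.map ((↑) : ℝ → ℂ)).Nodup := T.nodup.map Complex.ofReal_injective
  refine ⟨T.val.map (↑), hM, by simpa using fun x hx => ⟨hT hx, hs x hx⟩, hasZeros_of_nodup hM ?_,
    by simpa using hcard⟩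
  simp only [Multiset.mem_map, Finset.mem_val]
  rintro _ ⟨x, hx, rfl⟩
  rw [← hG.ofReal_re, (hs x hx).eq_zero, Complex.ofReal_zero]
  exact Complex.continuous_re.continuousAt.comp
    (hc.continuousAt (Icc_mem_nhds (hT hx).1 (hT hx).2))

lemma SignChangesGE.lt_of_czerosLT {N N' : ℕ} (h : SignChangesGE (fun x => (G x).re) a b N)
    (hG : ConjSymm G) (hc : ContinuousOn (fun x : ℝ => G x) (Icc a b))
    (hz : CZerosLT G (cpx (Icc a b)) N') : N < N' := by
  obtain ⟨M, -, hM, hGM, hcard⟩ := h.exists_hasZeros hG hc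
  exact hcard.trans_lt (czerosLT_iff.mp hz M
    (fun s hs => cpx_mono (fun x hx => Ioo_subset_Icc_self hx.1) (hM s hs)) hGM)

lemma signChangesGE_re_of_hasZeros {M : Multiset ℂ}
    (hull : convexHull ℝ (msupport μ) = Icc a b) (inf : (msupport μ).Infinite)
    (hG : ConjSymm G) (hGc : ContinuousOn (fun x : ℝ => G x) (Icc a b))
    (hfin : {x ∈ Icc a b | G x = 0}.Finite) (he : e ≠ 0) (hF : ConjSymm F)
    (hq : q ∈ degreeLT ℂ d)
    (hFq : EqOn F (fun z => q.eval z + e * cauchyTransform μ (fun t => G t) z) (cpx (Icc a b))ᶜ)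
    (hdr : d = 0 ∨ r = 0) (ho : Orth μ r (fun t => G t))
    (hM : ∀ s ∈ M, s ∉ cpx (Icc a b)) (hz : HasZeros F M) :
    SignChangesGE (fun x => (G x).re) a b (r + M.card - d) := by
  have hre : (fun t : ℝ => (((G t).re * e : ℝ) : ℂ)) = fun t : ℝ => (e : ℂ) * G t := by
    funext t
    rw [Complex.ofReal_mul, hG.ofReal_re, mul_comm]
  refine (signChangesGE_of_hasZeros (g := fun t => (G t).re * e) hull inf
    ((Complex.continuous_re.comp_continuousOn hGc).mul continuousOn_const)
    (hfin.subset ?_) hF hq ?_ hdr ?_ hM hz).of_mul continuousOn_const fun _ _ => he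
  · exact fun t ⟨ht, h0⟩ => ⟨ht, by
      rw [← hG.ofReal_re, (mul_eq_zero.mp h0).resolve_right he, Complex.ofReal_zero]⟩
  · simpa only [hre, cauchyTransform_const_mul] using hFq
  · simpa only [hre] using ho.const_mul e

lemma CZerosLT.of_eqOn_cauchyTransform {N N' : ℕ} (hGz : CZerosLT G (cpx (Icc a b)) N)
    (hull : convexHull ℝ (msupport μ) = Icc a b) (inf : (msupport μ).Infinite)
    (hG : ConjSymm G) (hGc : ContinuousOn (fun x : ℝ => G x) (Icc a b)) (he : e ≠ 0)
    (hF : ConjSymm F) (hq : q ∈ degreeLT ℂ d)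
    (hFq : EqOn F (fun z => q.eval z + e * cauchyTransform μ (fun t => G t) z) (cpx (Icc a b))ᶜ)
    (hdr : d = 0 ∨ r = 0) (ho : Orth μ r (fun t => G t)) (hN : N + d ≤ N' + r) :
    CZerosLT F (cpx (Icc a b))ᶜ N' := by
  rw [czerosLT_iff]
  intro M hM hz
  have := (signChangesGE_re_of_hasZeros hull inf hG hGc (finite_setOf_zero_of_czerosLT hGz) he hF
    hq hFq hdr ho hM hz).lt_of_czerosLT hG hGc hGz
  omega

end Transfer

/-! ### Linear forms of a Nikishin system -/

section Weights

variable {μ : ℕ → Measure ℝ} {e : ℕ → ℝ} {j k : ℕ}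

@[simp]
lemma wt_self (z : ℂ) : wt μ e j j z = 1 := by
  simp [wt]

lemma wt_of_lt (hjk : j < k) (z : ℂ) :
    wt μ e j k z = e (j + 1) * cauchyTransform (μ (j + 1)) (fun t => wt μ e (j + 1) k t) z := by
  obtain ⟨_ | g, rfl⟩ := Nat.exists_eq_add_of_le hjk
  · simp [wt, nikhat, cauchyTransform]
  · simp [wt, nikhat, cauchyTransform, show j + 1 + (g + 1) - (j + 1) = g + 1 by omega,
      show j + 1 + (g + 1) - (j + 1 + 1) = g by omega, show j < j + 1 + (g + 1) by omega]

lemma conjSymm_wt (hjk : j ≤ k) : ConjSymm (wt μ e j k) := by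
  induction hjk using Nat.decreasingInduction with
  | self => exact fun z => by simp
  | of_succ j hj ih =>
    rw [funext (wt_of_lt hj)]
    exact (conjSymm_cauchyTransform (μ (j + 1)) ih).const_mul (e (j + 1))

lemma conjSymm_linForm (m : ℕ) (A : ℕ → ℝ[X]) : ConjSymm (linForm μ e m j A) :=
  conjSymm_finsetSum _ fun k hk =>
    (conjSymm_aeval (A k)).mul (conjSymm_wt (Finset.mem_Icc.mp hk).1)

lemma linFormNeg_succ (F : ℂ → ℂ) :
    linFormNeg μ e F (j + 1) =
      fun z => e j * cauchyTransform (μ j) (fun t => linFormNeg μ e F j t) z :=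
  rfl

lemma conjSymm_linFormNeg {F : ℂ → ℂ} (hF : ConjSymm F) (j : ℕ) :
    ConjSymm (linFormNeg μ e F j) := by
  induction j with
  | zero => exact hF
  | succ j ih => exact (conjSymm_cauchyTransform (μ j) ih).const_mul (e j)

end Weights

lemma tailSum_of_le {m : ℕ} (n : ℕ → ℕ) {j : ℕ} (hj : j ≤ m) :
    tailSum m n j = n j + tailSum m n (j + 1) := by
  rw [tailSum, ← Finset.insert_Icc_succ_left_eq_Icc hj, Finset.sum_insert (by simp)]
  rfl

lemma Decr.le {m : ℕ} {n : ℕ → ℕ} (h : Decr m n) {j k : ℕ} (hjk : j ≤ k) (hk : k ≤ m) :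
    n k ≤ n j := by
  induction hjk using Nat.decreasingInduction with
  | self => exact le_rfl
  | of_succ j hj ih => exact ih.trans (h j (hj.trans_le hk))

lemma HasZeros.card_lt_of_aeval {p : ℝ[X]} (hp : p ≠ 0) {n : ℕ} (hn : p.degree < n)
    {M : Multiset ℂ} (h : HasZeros (fun z => aeval z p) M) : M.card < n := by
  set P := p.map (algebraMap ℝ ℂ) with hP
  have hP0 : P ≠ 0 := Polynomial.map_ne_zero hp
  have hder (i : ℕ) :
      iteratedDeriv i (fun z => aeval z p) = fun z => (derivative^[i] P).eval z := by
    induction i with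
    | zero => simp [hP]
    | succ i ih =>
      funext z
      rw [iteratedDeriv_succ, ih, Function.iterate_succ_apply', Polynomial.deriv]
  have hroots : M ≤ P.roots := Multiset.le_iff_count.mpr fun s => by
    rw [count_roots]
    by_contra! hs
    refine (lt_rootMultiplicity_iff_isRoot_iterate_derivative hP0 (n := P.rootMultiplicity s)
      (t := s)).not.mp (lt_irrefl _) fun i hi => ?_
    rw [IsRoot, ← congrFun (hder i) s]
    exact h s i (hi.trans_lt hs)
  calc M.card ≤ P.natDegree := (Multiset.card_le_card hroots).trans P.card_roots'
    _ < n := (natDegree_lt_iff_degree_lt hP0).mpr (degree_map_le.trans_lt hn)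

namespace NikSys

variable {m : ℕ} (S : NikSys m) {j k : ℕ}

instance (j : ℕ) : IsFiniteMeasure (S.μ j) := S.fin j

lemma e_ne_zero (j : ℕ) : S.e j ≠ 0 := by
  rcases S.sgn j with h | h <;> simp [h]

lemma ae_mem_Icc (hj : j ≤ m) : ∀ᵐ t ∂S.μ j, t ∈ Icc (S.a j) (S.b j) :=
  ae_mem_of_convexHull_msupport_eq (S.hull j hj)

lemma disjoint_Icc_succ (hj : j < m) :
    Disjoint (Icc (S.a j) (S.b j)) (Icc (S.a (j + 1)) (S.b (j + 1))) :=
  disjoint_iff_inter_eq_empty.mpr (S.disj j hj)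

lemma cpx_Icc_subset_compl (hj : j < m) :
    cpx (Icc (S.a j) (S.b j)) ⊆ (cpx (Icc (S.a (j + 1)) (S.b (j + 1))))ᶜ := by
  rintro _ ⟨x, hx, rfl⟩
  exact mt ofReal_mem_cpx.mp ((S.disjoint_Icc_succ hj).notMem_of_mem_left hx)

lemma continuousOn_wt (hjk : j ≤ k) (hk : k ≤ m) :
    ContinuousOn (fun t : ℝ => wt S.μ S.e j k t) (Icc (S.a j) (S.b j)) := by
  induction hjk using Nat.decreasingInduction with
  | self => simpa using continuousOn_const
  | of_succ j hj ih =>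
    simp only [wt_of_lt hj]
    exact continuousOn_const.mul (continuousOn_cauchyTransform_ofReal isCompact_Icc
      (S.ae_mem_Icc (by omega)) ih (S.disjoint_Icc_succ (by omega)).symm)

lemma continuousOn_aeval_mul_wt (p : ℝ[X]) (hjk : j ≤ k) (hk : k ≤ m) :
    ContinuousOn (fun t : ℝ => aeval (t : ℂ) p * wt S.μ S.e j k t) (Icc (S.a j) (S.b j)) :=
  ContinuousOn.mul (by fun_prop) (S.continuousOn_wt hjk hk)

lemma continuousOn_linForm (j : ℕ) (A : ℕ → ℝ[X]) :
    ContinuousOn (fun t : ℝ => linForm S.μ S.e m j A t) (Icc (S.a j) (S.b j)) :=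
  continuousOn_finsetSum _ fun k hk =>
    S.continuousOn_aeval_mul_wt (A k) (Finset.mem_Icc.mp hk).1 (Finset.mem_Icc.mp hk).2

lemma exists_aeval_mul_wt_eq {p : ℝ[X]} {n : ℕ} (hp : p.degree < n) (hjk : j < k) (hk : k ≤ m) :
    ∃ q ∈ degreeLT ℂ n, ∀ z ∉ cpx (Icc (S.a (j + 1)) (S.b (j + 1))),
      aeval z p * wt S.μ S.e j k z = q.eval z + S.e (j + 1) *
        cauchyTransform (S.μ (j + 1)) (fun t => aeval (t : ℂ) p * wt S.μ S.e (j + 1) k t) z := by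
  obtain ⟨q, hq, hqz⟩ := exists_eval_mul_cauchyTransform_eq isCompact_Icc
    (S.ae_mem_Icc (hjk.trans_le hk)) (S.continuousOn_wt hjk hk)
    (mem_degreeLT.mpr (degree_map_le.trans_lt hp : (p.map (algebraMap ℝ ℂ)).degree < n))
  refine ⟨(S.e (j + 1) : ℂ) • q, Submodule.smul_mem _ _ hq, fun z hz => ?_⟩
  have := hqz z hz
  simp only [eval_map_algebraMap] at this
  rw [wt_of_lt hjk, mul_left_comm, this, eval_smul, smul_eq_mul, mul_add]

lemma exists_linForm_eq {n : ℕ → ℕ} (hn : Decr m n) {A : ℕ → ℝ[X]}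
    (hA : ∀ k ≤ m, (A k).degree < n k) (hj : j < m) :
    ∃ q ∈ degreeLT ℂ (n j), ∀ z ∉ cpx (Icc (S.a (j + 1)) (S.b (j + 1))),
      linForm S.μ S.e m j A z = q.eval z + S.e (j + 1) *
        cauchyTransform (S.μ (j + 1)) (fun t => linForm S.μ S.e m (j + 1) A t) z := by
  have hex : ∀ k ∈ Finset.Icc (j + 1) m, ∃ q ∈ degreeLT ℂ (n j), ∀ z ∉ _, _ := fun k hk =>
    have hk' := Finset.mem_Icc.mp hk
    S.exists_aeval_mul_wt_eq ((hA k hk'.2).trans_le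
      (mod_cast hn.le (j.le_succ.trans hk'.1) hk'.2)) hk'.1 hk'.2
  choose! q hq hqz using hex
  refine ⟨(A j).map (algebraMap ℝ ℂ) + ∑ k ∈ Finset.Icc (j + 1) m, q k, Submodule.add_mem _
    (mem_degreeLT.mpr (degree_map_le.trans_lt (hA j hj.le))) (Submodule.sum_mem _ hq),
    fun z hz => ?_⟩
  simp only [linForm]
  rw [← Finset.insert_Icc_succ_left_eq_Icc hj.le, Finset.sum_insert (by simp),
    Order.succ_eq_add_one, Finset.sum_congr rfl fun k hk => hqz k hk z hz, Finset.sum_add_distrib,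
    cauchyTransform_finsetSum isCompact_Icc (S.ae_mem_Icc hj) (fun k hk =>
      S.continuousOn_aeval_mul_wt (A k) (Finset.mem_Icc.mp hk).1 (Finset.mem_Icc.mp hk).2) hz,
    Finset.mul_sum]
  simp [eval_finsetSum, add_assoc]

lemma linForm_eq_aeval {μ : ℕ → Measure ℝ} {e : ℕ → ℝ} {A : ℕ → ℝ[X]} (hj : j ≤ m)
    (hA : ∀ k ∈ Finset.Icc (j + 1) m, A k = 0) :
    linForm μ e m j A = fun z => aeval z (A j) := by
  funext z
  rw [linForm, ← Finset.insert_Icc_succ_left_eq_Icc hj, Finset.sum_insert (by simp), wt_self,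
    mul_one, Finset.sum_eq_zero fun k hk => by rw [hA k hk, map_zero, zero_mul], add_zero]

-- Each Cauchy transform from level `j + 1` to level `j` adds at most `n j` zeros to those of the
-- last nonzero polynomial.
lemma czerosLT_linForm {n : ℕ → ℕ} (hn : Decr m n) {A : ℕ → ℝ[X]}
    (hA : ∀ k ≤ m, (A k).degree < n k) (hj : j ≤ m) (hA0 : ∃ k ∈ Finset.Icc j m, A k ≠ 0) :
    CZerosLT (linForm S.μ S.e m j A) (cpx (Icc (S.a j) (S.b j))) (tailSum m n j) := by
  induction hj using Nat.decreasingInduction with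
  | self =>
    obtain ⟨k, hk, hAk⟩ := hA0
    obtain rfl : k = m := by simpa using hk
    rw [linForm_eq_aeval le_rfl (by simp), czerosLT_iff]
    exact fun M _ hM => (hM.card_lt_of_aeval hAk (hA k le_rfl)).trans_le (by simp [tailSum])
  | of_succ j hj ih =>
    rw [tailSum_of_le n hj.le]
    by_cases hA1 : ∃ k ∈ Finset.Icc (j + 1) m, A k ≠ 0
    · obtain ⟨q, hq, hqz⟩ := S.exists_linForm_eq hn hA hj
      exact ((ih hA1).of_eqOn_cauchyTransform (S.hull _ hj) (S.inf _ hj) (conjSymm_linForm m A)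
        (S.continuousOn_linForm (j + 1) A) (S.e_ne_zero _) (conjSymm_linForm m A) hq hqz (.inr rfl)
        orth_zero (by omega)).anti (S.cpx_Icc_subset_compl hj)
    · push Not at hA1
      have hAj : A j ≠ 0 := fun h0 => by
        obtain ⟨k, hk, hAk⟩ := hA0
        rcases eq_or_ne k j with rfl | hkj
        · exact hAk h0
        · exact hAk (hA1 k (by simp at hk ⊢; omega))
      rw [linForm_eq_aeval hj.le hA1, czerosLT_iff]
      exact fun M _ hM => (hM.card_lt_of_aeval hAj (hA j hj.le)).trans_le (Nat.le_add_right _ _)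

end NikSys

/-! ### Forms with negative index -/

/-- `F` is real symmetric and continuous on `Δ_0`, and satisfies the orthogonality relations
`∫ x^ν F(x) ds_{0,k}(x) = 0`, `ν < n k`, of a mixed type form relative to the Nikishin system `S`.
The constant sign `S.e 0` of `σ_0` is dropped. -/
structure NikSys.OrthForm {m : ℕ} (S : NikSys m) (n : ℕ → ℕ) (F : ℂ → ℂ) : Prop where
  conjSymm : ConjSymm F
  continuousOn : ContinuousOn (fun x : ℝ => F x) (Icc (S.a 0) (S.b 0))
  orth : ∀ k ≤ m, Orth (S.μ 0) (n k) (fun x => F x * wt S.μ S.e 0 k x)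

namespace NikSys.OrthForm

variable {m : ℕ} {S : NikSys m} {n : ℕ → ℕ} {F : ℂ → ℂ} {j k : ℕ}

lemma mono {n' : ℕ → ℕ} (h : S.OrthForm n F) (hn : ∀ k ≤ m, n' k ≤ n k) : S.OrthForm n' F :=
  ⟨h.conjSymm, h.continuousOn, fun k hk => (h.orth k hk).mono (hn k hk)⟩

lemma const_mul (h : S.OrthForm n F) (c : ℝ) : S.OrthForm n (fun z => c * F z) :=
  ⟨h.conjSymm.const_mul c, continuousOn_const.mul h.continuousOn, fun k hk => by
    simpa only [mul_assoc] using (h.orth k hk).const_mul (c : ℂ)⟩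

lemma add {F' : ℂ → ℂ} (h : S.OrthForm n F) (h' : S.OrthForm n F') :
    S.OrthForm n (fun z => F z + F' z) := by
  refine ⟨h.conjSymm.add h'.conjSymm, h.continuousOn.add h'.continuousOn, fun k hk => ?_⟩
  have hw := S.continuousOn_wt (Nat.zero_le k) hk
  simpa only [add_mul, Pi.mul_apply] using (h.orth k hk).add isCompact_Icc (S.ae_mem_Icc m.zero_le)
    (h.continuousOn.mul hw) (h'.continuousOn.mul hw) (h'.orth k hk)

lemma continuousOn_linFormNeg (h : S.OrthForm n F) (hj : j ≤ m) :
    ContinuousOn (fun x : ℝ => linFormNeg S.μ S.e F j x) (Icc (S.a j) (S.b j)) := by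
  induction j with
  | zero => exact h.continuousOn
  | succ j ih =>
    exact continuousOn_const.mul (continuousOn_cauchyTransform_ofReal isCompact_Icc
      (S.ae_mem_Icc (by omega)) (ih (by omega)) (S.disjoint_Icc_succ hj))

lemma analyticAt_linFormNeg_succ (h : S.OrthForm n F) (hj : j ≤ m) {z : ℂ}
    (hz : z ∉ cpx (Icc (S.a j) (S.b j))) : AnalyticAt ℂ (linFormNeg S.μ S.e F (j + 1)) z :=
  analyticAt_const.mul (analyticAt_cauchyTransform isCompact_Icc (S.ae_mem_Icc hj)
    (h.continuousOn_linFormNeg hj) hz)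

lemma orth_linFormNeg_mul_wt (hn : Decr m n) (h : S.OrthForm n F) (hjk : j ≤ k) (hk : k ≤ m) :
    Orth (S.μ j) (n k) (fun x => linFormNeg S.μ S.e F j x * wt S.μ S.e j k x) := by
  induction j generalizing k with
  | zero => exact h.orth k hk
  | succ j ih =>
    have hj : j ≤ m := by omega
    have hG : Orth (S.μ j) (n j) (fun x => linFormNeg S.μ S.e F j x) := by
      simpa using ih le_rfl hj
    have hGw := ih (k := k) (by omega) hk
    simp only [wt_of_lt hjk, mul_left_comm _ (S.e (j + 1) : ℂ)] at hGw
    rw [orth_const_mul_iff (mod_cast S.e_ne_zero (j + 1))] at hGw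
    simp only [linFormNeg_succ, mul_assoc]
    exact (hG.cauchyTransform_mul isCompact_Icc (S.ae_mem_Icc hj) isCompact_Icc
      (S.ae_mem_Icc (hjk.trans hk)) (S.disjoint_Icc_succ (hjk.trans hk))
      (h.continuousOn_linFormNeg hj) (S.continuousOn_wt hjk hk) hGw
      (hn.le (by omega) hk)).const_mul _

lemma orth_linFormNeg (hn : Decr m n) (h : S.OrthForm n F) (hj : j ≤ m) :
    Orth (S.μ j) (n j) (fun x => linFormNeg S.μ S.e F j x) := by
  simpa using h.orth_linFormNeg_mul_wt hn le_rfl hj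

lemma eqOn_linFormNeg_succ (S : NikSys m) (F : ℂ → ℂ) (j : ℕ) (D : Set ℂ) :
    EqOn (linFormNeg S.μ S.e F (j + 1)) (fun z => (0 : ℂ[X]).eval z +
      S.e j * cauchyTransform (S.μ j) (fun t => linFormNeg S.μ S.e F j t) z) D := fun z _ => by
  simp [linFormNeg_succ]

variable {K : ℕ}

lemma czerosLT_linFormNeg_succ_of_czerosLT (hn : Decr m n) (h : S.OrthForm n F) (hj : j ≤ m)
    (hz : CZerosLT (linFormNeg S.μ S.e F j) (cpx (Icc (S.a j) (S.b j))) (tailSum m n j + K)) :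
    CZerosLT (linFormNeg S.μ S.e F (j + 1)) (cpx (Icc (S.a j) (S.b j)))ᶜ
      (tailSum m n (j + 1) + K) :=
  hz.of_eqOn_cauchyTransform (S.hull j hj) (S.inf j hj) (conjSymm_linFormNeg h.conjSymm j)
    (h.continuousOn_linFormNeg hj) (S.e_ne_zero j) (conjSymm_linFormNeg h.conjSymm (j + 1))
    (zero_mem (degreeLT ℂ 0)) (eqOn_linFormNeg_succ S F j _) (.inl rfl) (h.orth_linFormNeg hn hj)
    (by have := tailSum_of_le n hj; omega)

lemma czerosLT_linFormNeg (hn : Decr m n) (h : S.OrthForm n F)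
    (hz : CZerosLT F (cpx (Icc (S.a 0) (S.b 0))) (tailSum m n 0 + K)) (hj : j ≤ m) :
    CZerosLT (linFormNeg S.μ S.e F j) (cpx (Icc (S.a j) (S.b j))) (tailSum m n j + K) := by
  induction j with
  | zero => exact hz
  | succ j ih =>
    exact (h.czerosLT_linFormNeg_succ_of_czerosLT hn (by omega) (ih (by omega))).anti
      (subset_compl_comm.mp (S.cpx_Icc_subset_compl hj))

lemma signChangesGE_linFormNeg (hn : Decr m n) (h : S.OrthForm n F)
    (hz : CZerosLT F (cpx (Icc (S.a 0) (S.b 0))) (tailSum m n 0 + K)) (hj : j ≤ m) :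
    SignChangesGE (fun x => (linFormNeg S.μ S.e F j x).re) (S.a j) (S.b j) (tailSum m n j) := by
  have hstep {j : ℕ} (hj : j ≤ m) {M : Multiset ℂ} (hM : ∀ s ∈ M, s ∉ cpx (Icc (S.a j) (S.b j)))
      (hzM : HasZeros (linFormNeg S.μ S.e F (j + 1)) M) :=
    signChangesGE_re_of_hasZeros (S.hull j hj) (S.inf j hj) (conjSymm_linFormNeg h.conjSymm j)
      (h.continuousOn_linFormNeg hj)
      (finite_setOf_zero_of_czerosLT (h.czerosLT_linFormNeg hn hz hj)) (S.e_ne_zero j)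
      (conjSymm_linFormNeg h.conjSymm (j + 1)) (zero_mem (degreeLT ℂ 0))
      (eqOn_linFormNeg_succ S F j _) (.inl rfl) (h.orth_linFormNeg hn hj) hM hzM
  induction hj using Nat.decreasingInduction with
  | self => exact (hstep le_rfl (M := 0) (by simp) (by simp [HasZeros])).mono (by simp [tailSum])
  | of_succ j hj ih =>
    obtain ⟨M, -, hM, hzM, hcard⟩ := ih.exists_hasZeros (conjSymm_linFormNeg h.conjSymm (j + 1))
      (h.continuousOn_linFormNeg hj)
    refine (hstep hj.le (fun s hs => ?_) hzM).mono ?_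
    · exact subset_compl_comm.mp (S.cpx_Icc_subset_compl hj)
        (cpx_mono (fun x hx => Ioo_subset_Icc_self hx.1) (hM s hs))
    · have := tailSum_of_le n hj.le
      omega

end NikSys.OrthForm

/-! ### Reality and simplicity of zeros -/

section RealSimple

variable {g : ℂ → ℂ} {x : ℝ}

lemma deriv_deriv_eq_zero_of_signChangeAt {f : ℝ → ℝ} (h : SignChangeAt f x) (h0 : f x = 0)
    (h1 : deriv f x = 0) (hf : ContinuousAt f x) : deriv (deriv f) x = 0 := by
  by_contra h2
  refine not_signChangeAt_iff_eventually.mpr ?_ h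
  rcases lt_or_gt_of_ne h2 with h2 | h2
  · exact .inl (h0 ▸ isLocalMax_of_deriv_deriv_neg h2 h1 hf)
  · exact .inr (h0 ▸ isLocalMin_of_deriv_deriv_pos h2 h1 hf)

lemma deriv_re_ofReal (hg : AnalyticAt ℂ g x) :
    deriv (fun t : ℝ => (g t).re) x = (deriv g x).re :=
  hg.differentiableAt.hasDerivAt.real_of_complex.deriv

lemma deriv_deriv_re_ofReal (hg : AnalyticAt ℂ g x) :
    deriv (deriv fun t : ℝ => (g t).re) x = (deriv (deriv g) x).re := by
  have h : deriv (fun t : ℝ => (g t).re) =ᶠ[𝓝 x] fun t : ℝ => (deriv g t).re :=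
    (Complex.continuous_ofReal.continuousAt.eventually hg.eventually_analyticAt).mono
      fun t ht => deriv_re_ofReal ht
  rw [h.deriv_eq, deriv_re_ofReal hg.deriv]

lemma iteratedDeriv_two_eq_zero_of_signChangeAt (hc : ConjSymm g) (hg : AnalyticAt ℂ g x)
    (h0 : g x = 0) (h1 : deriv g x = 0) (hs : SignChangeAt (fun t => (g t).re) x) :
    iteratedDeriv 2 g x = 0 := by
  have h2 := deriv_deriv_eq_zero_of_signChangeAt hs (by simp [h0])
    (by rw [deriv_re_ofReal hg, h1, Complex.zero_re])
    hg.differentiableAt.hasDerivAt.real_of_complex.continuousAt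
  rw [deriv_deriv_re_ofReal hg] at h2
  rw [iteratedDeriv_succ, iteratedDeriv_one, ← hc.deriv.deriv.ofReal_re, h2, Complex.ofReal_zero]

variable {D : Set ℂ} {N : ℕ} {a b : ℝ} {z : ℂ}

lemma SignChangesGE.im_eq_zero_of_czerosLT (hs : SignChangesGE (fun t => (g t).re) a b N)
    (hc : ConjSymm g) (hgc : ContinuousOn (fun t : ℝ => g t) (Icc a b)) (hD : cpx (Icc a b) ⊆ D)
    (hDc : ∀ w ∈ D, conj w ∈ D) (hlt : CZerosLT g D (N + 2)) (hz : z ∈ D) (h0 : g z = 0) :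
    z.im = 0 := by
  by_contra him
  obtain ⟨M, -, hM, hzM, hcard⟩ := hs.exists_hasZeros hc hgc
  have hnotMem {w : ℂ} (hw : w.im ≠ 0) : w ∉ M := fun hwM => by
    obtain ⟨x, -, rfl⟩ := hM w hwM
    exact hw (Complex.ofReal_im x)
  have hne : conj z ≠ z := fun h => him (Complex.conj_eq_iff_im.mp h)
  have := czerosLT_iff.mp hlt (z ::ₘ conj z ::ₘ M)
    (by simpa using ⟨hz, hDc z hz, fun s hs =>
      hD (cpx_mono (fun x hx => Ioo_subset_Icc_self hx.1) (hM s hs))⟩)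
    (by simp [hasZeros_cons, hzM, hnotMem him, hnotMem (w := conj z) (by simpa using him), hne.symm,
      hc z, h0])
  simp at this
  omega

-- A double zero at one of the sign changes would be at least triple, as the order there is odd.
lemma SignChangesGE.deriv_ne_zero_of_czerosLT (hs : SignChangesGE (fun t => (g t).re) a b N)
    (hc : ConjSymm g) (hgc : ContinuousOn (fun t : ℝ => g t) (Icc a b)) (hD : cpx (Icc a b) ⊆ D)
    (hlt : CZerosLT g D (N + 2)) (hg : AnalyticAt ℂ g z) (hz : z ∈ D) (h0 : g z = 0) :
    deriv g z ≠ 0 := fun h1 => by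
  obtain ⟨M, hMnd, hM, hzM, hcard⟩ := hs.exists_hasZeros hc hgc
  suffices h : HasZeros g (z ::ₘ z ::ₘ M) by
    have := czerosLT_iff.mp hlt _ (by simpa using ⟨hz, fun s hs =>
      hD (cpx_mono (fun x hx => Ioo_subset_Icc_self hx.1) (hM s hs))⟩) h
    simp at this
    omega
  by_cases hzT : z ∈ M
  · obtain ⟨x, ⟨-, hx⟩, rfl⟩ := hM z hzT
    simp [hasZeros_cons, hzM, Multiset.count_eq_one_of_mem hMnd hzT, h1,
      iteratedDeriv_two_eq_zero_of_signChangeAt hc hg h0 h1 hx]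
  · simp [hasZeros_cons, hzM, Multiset.count_eq_zero_of_notMem hzT, h0, h1]

end RealSimple

/-! ### Mixed type multiple orthogonal polynomials -/

lemma msum_eq_tailSum_zero (m : ℕ) (n : ℕ → ℕ) : msum m n = tailSum m n 0 := by
  rw [msum, tailSum, ← Nat.range_succ_eq_Icc_zero]

lemma le_bump (l : ℕ) (n : ℕ → ℕ) (j : ℕ) : n j ≤ bump l n j := by
  unfold bump
  split_ifs <;> omega

lemma msum_bump {m l : ℕ} (n : ℕ → ℕ) (hl : l ≤ m) : msum m (bump l n) = msum m n + 1 := by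
  have hbump (j : ℕ) : bump l n j = n j + if j = l then 1 else 0 := by
    unfold bump
    split_ifs <;> rfl
  simp [msum, hbump, Finset.sum_add_distrib, Nat.lt_succ_of_le hl]

lemma linForm_add_const_mul (μ : ℕ → Measure ℝ) (e : ℕ → ℝ) (m j : ℕ) (A A' : ℕ → ℝ[X])
    (c d : ℝ) : linForm μ e m j (fun k => C c * A k + C d * A' k) =
      fun z => c * linForm μ e m j A z + d * linForm μ e m j A' z := by
  funext z
  simp only [linForm, Finset.mul_sum, ← Finset.sum_add_distrib]
  refine Finset.sum_congr rfl fun k _ => ?_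
  simp only [map_add, map_mul, aeval_C, Complex.coe_algebraMap]
  ring

section MOP

variable {m₁ m₂ : ℕ} {S1 : NikSys m₁} {S2 : NikSys m₂} {n1 n2 n1' n2' : ℕ → ℕ} {A A' : ℕ → ℝ[X]}

lemma IsMOP.orthForm (hA : IsMOP m₁ m₂ S1 S2 n1 n2 A)
    (hbase : Icc (S2.a 0) (S2.b 0) ⊆ Icc (S1.a 0) (S1.b 0)) :
    S2.OrthForm n2 (linForm S1.μ S1.e m₁ 0 A) := by
  have hc := (S1.continuousOn_linForm 0 A).mono hbase
  refine ⟨conjSymm_linForm m₁ A, hc, fun k hk => ?_⟩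
  refine orth_of_forall_pow isCompact_Icc (S2.ae_mem_Icc m₂.zero_le)
    (hc.mul (S2.continuousOn_wt k.zero_le hk)) fun ν hν => ?_
  simpa [sInt, S2.e_ne_zero, mul_assoc] using hA.2.2 k hk ν hν

-- Otherwise orthogonality would force more zeros on `Δ_0` than the degrees of the `A k` allow.
lemma NikSys.OrthForm.msum_lt (h2 : Decr m₂ n2) (h : S2.OrthForm n2 (linForm S1.μ S1.e m₁ 0 A))
    (hbase : Icc (S2.a 0) (S2.b 0) ⊆ Icc (S1.a 0) (S1.b 0)) (h1 : Decr m₁ n1)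
    (hdeg : ∀ k ≤ m₁, (A k).degree < n1 k) (hA0 : ∃ k ≤ m₁, A k ≠ 0) :
    msum m₂ n2 < msum m₁ n1 := by
  have hz : CZerosLT (linForm S1.μ S1.e m₁ 0 A) (cpx (Icc (S2.a 0) (S2.b 0))) (msum m₁ n1) := by
    rw [msum_eq_tailSum_zero]
    exact (S1.czerosLT_linForm h1 hdeg m₁.zero_le (by simpa using hA0)).anti (cpx_mono hbase)
  rw [msum_eq_tailSum_zero]
  exact (h.signChangesGE_linFormNeg h2 (hz.mono (Nat.le_add_left _ _)) m₂.zero_le).lt_of_czerosLT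
    h.conjSymm h.continuousOn hz

lemma IsMOP.exists_add_const_mul_ne_zero (hA : IsMOP m₁ m₂ S1 S2 n1 n2 A)
    (hA' : IsMOP m₁ m₂ S1 S2 n1' n2' A')
    (hbase : Icc (S2.a 0) (S2.b 0) ⊆ Icc (S1.a 0) (S1.b 0)) (h1 : Decr m₁ n1) (h2' : Decr m₂ n2')
    (hsum : msum m₁ n1 ≤ msum m₂ n2') {c d : ℝ} (hcd : c ≠ 0 ∨ d ≠ 0) :
    ∃ k ≤ m₁, C c * A k + C d * A' k ≠ 0 := by
  rcases eq_or_ne d 0 with rfl | hd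
  · simpa [hcd.resolve_right (by simp)] using hA.2.1
  by_contra! h0
  have hA'_eq : ∀ k ≤ m₁, A' k = (-(d⁻¹ * c)) • A k := fun k hk => by
    rw [← inv_smul_smul₀ hd (A' k), smul_eq_C_mul d, eq_neg_of_add_eq_zero_right (h0 k hk),
      ← smul_eq_C_mul, smul_neg, smul_smul, neg_smul]
  exact hsum.not_gt ((hA'.orthForm hbase).msum_lt h2' hbase h1 (fun k hk => by
    rw [hA'_eq k hk]
    exact (degree_smul_le _ _).trans_lt (hA.1 k hk)) hA'.2.1)

lemma IsMOP.czerosLT_add_const_mul (hA : IsMOP m₁ m₂ S1 S2 n1 n2 A)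
    (hA' : IsMOP m₁ m₂ S1 S2 n1' n2' A')
    (hbase : Icc (S2.a 0) (S2.b 0) ⊆ Icc (S1.a 0) (S1.b 0)) (h1 : Decr m₁ n1)
    (h1' : Decr m₁ n1') (h2' : Decr m₂ n2') (hn1 : ∀ k ≤ m₁, n1 k ≤ n1' k)
    (hsum : msum m₁ n1 ≤ msum m₂ n2') {c d : ℝ} (hcd : c ≠ 0 ∨ d ≠ 0) :
    CZerosLT (fun z => c * linForm S1.μ S1.e m₁ 0 A z + d * linForm S1.μ S1.e m₁ 0 A' z)
      (cpx (Icc (S2.a 0) (S2.b 0))) (msum m₁ n1') := by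
  rw [← linForm_add_const_mul, msum_eq_tailSum_zero]
  refine (S1.czerosLT_linForm h1' (fun k hk => ?_) m₁.zero_le ?_).anti (cpx_mono hbase)
  · simp only [← smul_eq_C_mul, ← mem_degreeLT]
    exact add_mem
      (Submodule.smul_mem _ _ (mem_degreeLT.mpr ((hA.1 k hk).trans_le (mod_cast hn1 k hk))))
      (Submodule.smul_mem _ _ (mem_degreeLT.mpr (hA'.1 k hk)))
  · simpa using hA.exists_add_const_mul_ne_zero hA' hbase h1 h2' hsum hcd

theorem combination_negative_zero_structure_general (hA : IsMOP m₁ m₂ S1 S2 n1 n2 A)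
    (hA' : IsMOP m₁ m₂ S1 S2 n1' n2' A')
    (hbase : Icc (S2.a 0) (S2.b 0) ⊆ Icc (S1.a 0) (S1.b 0)) (h1 : Decr m₁ n1) (h2 : Decr m₂ n2)
    (h1' : Decr m₁ n1') (h2' : Decr m₂ n2') (hn1 : ∀ k ≤ m₁, n1 k ≤ n1' k)
    (hn2 : ∀ k ≤ m₂, n2 k ≤ n2' k) (hsum : msum m₁ n1 ≤ msum m₂ n2')
    (hsum' : msum m₁ n1' ≤ msum m₂ n2 + 2) {c d : ℝ} (hcd : c ≠ 0 ∨ d ≠ 0) {G : ℕ → ℂ → ℂ}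
    (hG : ∀ j, G j = linFormNeg S2.μ S2.e
      (fun z => c * linForm S1.μ S1.e m₁ 0 A z + d * linForm S1.μ S1.e m₁ 0 A' z) j)
    {j : ℕ} (hj : j + 1 ≤ m₂) :
    CZerosLE (G (j + 1)) (cpx (Icc (S2.a j) (S2.b j)))ᶜ (tailSum m₂ n2 (j + 1) + 1) ∧
      SignChangesGE (fun t => (G (j + 1) t).re) (S2.a (j + 1)) (S2.b (j + 1))
        (tailSum m₂ n2 (j + 1)) ∧
      ∀ z ∈ (cpx (Icc (S2.a j) (S2.b j)))ᶜ,
        G (j + 1) z = 0 → z.im = 0 ∧ deriv (G (j + 1)) z ≠ 0 := by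
  rw [hG]
  have hF := ((hA.orthForm hbase).const_mul c).add
    (((hA'.orthForm hbase).mono hn2).const_mul d)
  have hz := (hA.czerosLT_add_const_mul hA' hbase h1 h1' h2' hn1 hsum hcd).mono hsum'
  rw [msum_eq_tailSum_zero] at hz
  have hlt := hF.czerosLT_linFormNeg_succ_of_czerosLT (j := j) h2 (by omega)
    (hF.czerosLT_linFormNeg h2 hz (by omega))
  have hs := hF.signChangesGE_linFormNeg h2 hz hj
  have hsymm := conjSymm_linFormNeg (μ := S2.μ) (e := S2.e) hF.conjSymm (j + 1)
  have hcont := hF.continuousOn_linFormNeg hj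
  have hsub := subset_compl_comm.mp (S2.cpx_Icc_subset_compl hj)
  exact ⟨hlt.czerosLE le_rfl, hs, fun z hz hz0 =>
    ⟨hs.im_eq_zero_of_czerosLT hsymm hcont hsub (fun w => mt conj_mem_cpx_iff.mp) hlt hz hz0,
      hs.deriv_ne_zero_of_czerosLT hsymm hcont hsub hlt
        (hF.analyticAt_linFormNeg_succ (by omega) hz) hz hz0⟩⟩

end MOP

end

/-- For `j = 1,…,m₂` the form `𝒢_{n,-j} = A·𝒜_{n,-j} + B·𝒜_{n^l,-j}`
has at most `N_{2,j} + 1` zeros in `ℂ ∖ Δ²_{j-1}`, counting multiplicities, and at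
least `N_{2,j}` sign changes in the interior of `Δ²_j`; hence all its zeros in
`ℂ ∖ Δ²_{j-1}` are real and simple. -/
theorem combination_negative_zero_structure
    (m₁ m₂ : ℕ) (S1 : NikSys m₁) (S2 : NikSys m₂)
    (hbase : S1.μ 0 = S2.μ 0 ∧ S1.e 0 = S2.e 0)
    (n1 n2 : ℕ → ℕ) (l₁ l₂ : ℕ) (hl₁ : l₁ ≤ m₁) (hl₂ : l₂ ≤ m₂)
    (h1 : Decr m₁ n1) (h2 : Decr m₂ n2)
    (h1l : Decr m₁ (bump l₁ n1)) (h2l : Decr m₂ (bump l₂ n2))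
    (hsum : msum m₂ n2 + 1 = msum m₁ n1) (hlast : 1 ≤ n1 m₁)
    (A A' : ℕ → Polynomial ℝ)
    (hA : IsMOP m₁ m₂ S1 S2 n1 n2 A) (hAm : MonicLast m₁ A)
    (hA' : IsMOP m₁ m₂ S1 S2 (bump l₁ n1) (bump l₂ n2) A') (hA'm : MonicLast m₁ A')
    (c d : ℝ) (hcd : 0 < |c| + |d|)
    -- the forms `𝒢_{n,-j}`, obtained from `𝒢_{n,0}` by the recursion (4.1):
    (G : ℕ → ℂ → ℂ)
    (hG : ∀ j, G j = linFormNeg S2.μ S2.e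
      (fun z => (c : ℂ) * linForm S1.μ S1.e m₁ 0 A z +
        (d : ℂ) * linForm S1.μ S1.e m₁ 0 A' z) j) :
    ∀ j, 1 ≤ j → j ≤ m₂ →
      CZerosLE (G j) ((cpx (Set.Icc (S2.a (j-1)) (S2.b (j-1))))ᶜ)
        (tailSum m₂ n2 j + 1) ∧
      (∃ S : Finset ℝ, ↑S ⊆ Set.Ioo (S2.a j) (S2.b j) ∧
        tailSum m₂ n2 j ≤ S.card ∧
        ∀ x ∈ S, SignChangeAt (fun t : ℝ => (G j (t : ℂ)).re) x) ∧
      (∀ z ∈ (cpx (Set.Icc (S2.a (j-1)) (S2.b (j-1))))ᶜ,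
        G j z = 0 → z.im = 0 ∧ deriv (G j) z ≠ 0) := by
  have hbase' : Icc (S2.a 0) (S2.b 0) ⊆ Icc (S1.a 0) (S1.b 0) := by
    rw [← S1.hull 0 m₁.zero_le, ← S2.hull 0 m₂.zero_le, hbase.1]
  have hcd' : c ≠ 0 ∨ d ≠ 0 := by
    by_contra! h
    simp [h] at hcd
  rintro (_ | j) hj1 hj
  · omega
  · exact combination_negative_zero_structure_general hA hA' hbase' h1 h2 h1l h2l
      (fun k _ => le_bump l₁ n1 k) (fun k _ => le_bump l₂ n2 k) (by rw [msum_bump n2 hl₂, hsum])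
      (by rw [msum_bump n1 hl₁, ← hsum]) hcd' hG hj

end
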